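/- arXiv:2211.04962 — 2 statements merged into one kernel-verified Lean document; each statement's English description precedes it below -/
import Mathlib

section
/- Let Λ and Γ be finite dimensional algebras over a field K, let M, N be finitely generated left Λ-modules and M', N' finitely generated left Γ-modules. Then for every integer p ≥ 0 there is an isomorphism Ext^p_{Λ⊗Γ}(M⊗M', N⊗N') ≅ ⊕_{i+j=p} Ext^i_Λ(M,N) ⊗ Ext^j_Γ(M',N') of K-vector spaces. -/
open TensorProduct

section Pre
variable {K Λ Γ M N : Type*} [Field K] [Ring Λ] [Ring Γ] [Algebra K Λ] [Algebra K Γ]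
  [AddCommGroup M] [Module K M] [Module Λ M] [IsScalarTower K Λ M]
  [AddCommGroup N] [Module K N] [Module Γ N] [IsScalarTower K Γ N]

/-- The action of `Γ` on `M ⊗[K] N` through the right factor. -/
noncomputable def rsmul (g : Γ) (x : M ⊗[K] N) : M ⊗[K] N :=
  (TensorProduct.comm K M N).symm (g • TensorProduct.comm K M N x)

lemma rsmul_tmul (g : Γ) (m : M) (n : N) :
    rsmul g (m ⊗ₜ[K] n) = m ⊗ₜ[K] (g • n) := by
  simp [rsmul, TensorProduct.smul_tmul']

lemma rsmul_add (g : Γ) (x y : M ⊗[K] N) :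
    rsmul g (x + y) = rsmul g x + rsmul g y := by
  simp [rsmul, smul_add]

/-- The right-factor `Γ`-module structure on `M ⊗[K] N`.  Not an instance, to avoid
diamonds; it is only used to construct `tensorTensorModule` below. -/
noncomputable def tensorRightModule : Module Γ (M ⊗[K] N) where
  smul := rsmul
  one_smul x := by show rsmul 1 x = x; simp [rsmul]
  mul_smul g h x := by
    show rsmul (g * h) x = rsmul g (rsmul h x); simp [rsmul, mul_smul]
  smul_zero g := by show rsmul g 0 = 0; simp [rsmul]
  smul_add g x y := by show rsmul g (x + y) = rsmul g x + rsmul g y; exact rsmul_add g x y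
  add_smul g h x := by
    show rsmul (g + h) x = rsmul g x + rsmul h x; simp [rsmul, add_smul]
  zero_smul x := by show rsmul 0 x = 0; simp [rsmul]

instance tensorLeftTower : IsScalarTower K Λ (M ⊗[K] N) := by
  constructor
  intro c a x
  induction x using TensorProduct.induction_on with
  | zero => simp
  | tmul m n =>
      rw [TensorProduct.smul_tmul', TensorProduct.smul_tmul', smul_assoc]
      exact (TensorProduct.smul_tmul' c (a • m) n).symm
  | add x y hx hy => rw [smul_add, smul_add, hx, hy]; exact (smul_add c _ _).symm

lemma pre_smulCommClass :
    letI : Module Γ (M ⊗[K] N) := tensorRightModule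
    SMulCommClass Λ Γ (M ⊗[K] N) := by
  letI : Module Γ (M ⊗[K] N) := tensorRightModule
  constructor
  intro a g x
  show a • rsmul g x = rsmul g (a • x)
  induction x using TensorProduct.induction_on with
  | zero => simp [rsmul]
  | tmul m n => rw [rsmul_tmul, TensorProduct.smul_tmul', TensorProduct.smul_tmul', rsmul_tmul]
  | add x y hx hy => rw [rsmul_add, smul_add, hx, hy, smul_add, rsmul_add]

lemma pre_rightTower :
    letI : Module Γ (M ⊗[K] N) := tensorRightModule
    IsScalarTower K Γ (M ⊗[K] N) := by
  letI : Module Γ (M ⊗[K] N) := tensorRightModule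
  constructor
  intro c g x
  show rsmul (c • g) x = c • rsmul g x
  unfold rsmul
  rw [smul_assoc]
  exact map_smul (TensorProduct.comm K M N).symm c _

/-- The `(Λ ⊗[K] Γ)`-module structure on `M ⊗[K] N`, characterized by
`(a ⊗ₜ b) • (m ⊗ₜ n) = (a • m) ⊗ₜ (b • n)`. -/
noncomputable instance tensorTensorModule :
    Module (Λ ⊗[K] Γ) (M ⊗[K] N) :=
  letI : Module Γ (M ⊗[K] N) := tensorRightModule
  haveI := (pre_smulCommClass (K := K) (Λ := Λ) (Γ := Γ) (M := M) (N := N))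
  haveI := (pre_rightTower (K := K) (Γ := Γ) (M := M) (N := N))
  TensorProduct.Algebra.module

lemma tensorTensor_smul_tmul (a : Λ) (g : Γ) (m : M) (n : N) :
    (a ⊗ₜ[K] g) • (m ⊗ₜ[K] n) = (a • m) ⊗ₜ[K] (g • n) := by
  letI : Module Γ (M ⊗[K] N) := tensorRightModule
  haveI := (pre_smulCommClass (K := K) (Λ := Λ) (Γ := Γ) (M := M) (N := N))
  haveI := (pre_rightTower (K := K) (Γ := Γ) (M := M) (N := N))
  show TensorProduct.Algebra.moduleAux (a ⊗ₜ[K] g) (m ⊗ₜ[K] n) = _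
  rw [TensorProduct.Algebra.moduleAux_apply]
  show a • rsmul g (m ⊗ₜ[K] n) = _
  rw [rsmul_tmul, TensorProduct.smul_tmul']

instance tensorTensorTower : IsScalarTower K (Λ ⊗[K] Γ) (M ⊗[K] N) := by
  constructor
  intro c x v
  letI : Module Γ (M ⊗[K] N) := tensorRightModule
  haveI := (pre_smulCommClass (K := K) (Λ := Λ) (Γ := Γ) (M := M) (N := N))
  haveI := (pre_rightTower (K := K) (Γ := Γ) (M := M) (N := N))
  show TensorProduct.Algebra.moduleAux (c • x) v = c • TensorProduct.Algebra.moduleAux x v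
  rw [map_smul, LinearMap.smul_apply]

end Pre

universe u

open CategoryTheory

noncomputable def extGrp (K : Type u) [Field K] (A : Type u) [Ring A] [Algebra K A]
    (n : ℕ) (X Y : Type u) [AddCommGroup X] [Module A X] [AddCommGroup Y] [Module A Y] :
    ModuleCat.{u} K :=
  ((_root_.Ext K (ModuleCat.{u} A) n).obj (Opposite.op (ModuleCat.of A X))).obj
    (ModuleCat.of A Y)

namespace KunnethExt
open TensorProduct Limits Abelian
open scoped ModuleCat

section A
variable {K Λ Γ : Type u} [Field K] [Ring Λ] [Ring Γ] [Algebra K Λ] [Algebra K Γ]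

/-- The tensor product of a `Λ`-linear and a `Γ`-linear map, as a `Λ ⊗ Γ`-linear map. -/
noncomputable def tmap {M N M' N' : Type*}
    [AddCommGroup M] [Module K M] [Module Λ M] [IsScalarTower K Λ M]
    [AddCommGroup N] [Module K N] [Module Λ N] [IsScalarTower K Λ N]
    [AddCommGroup M'] [Module K M'] [Module Γ M'] [IsScalarTower K Γ M']
    [AddCommGroup N'] [Module K N'] [Module Γ N'] [IsScalarTower K Γ N']
    (f : M →ₗ[Λ] N) (g : M' →ₗ[Γ] N') : M ⊗[K] M' →ₗ[Λ ⊗[K] Γ] N ⊗[K] N' where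
  toFun := TensorProduct.map (f.restrictScalars K) (g.restrictScalars K)
  map_add' := map_add _
  map_smul' a x := by
    induction a using TensorProduct.induction_on with
    | zero => simp
    | add a b ha hb => simp only [add_smul, map_add, ha, hb, RingHom.id_apply]
    | tmul a b =>
      induction x using TensorProduct.induction_on with
      | zero => simp
      | add x y hx hy => simp only [smul_add, map_add, hx, hy]
      | tmul m n => simp [tensorTensor_smul_tmul]

@[simp] lemma tmap_tmul {M N M' N' : Type*}
    [AddCommGroup M] [Module K M] [Module Λ M] [IsScalarTower K Λ M]
    [AddCommGroup N] [Module K N] [Module Λ N] [IsScalarTower K Λ N]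
    [AddCommGroup M'] [Module K M'] [Module Γ M'] [IsScalarTower K Γ M']
    [AddCommGroup N'] [Module K N'] [Module Γ N'] [IsScalarTower K Γ N']
    (f : M →ₗ[Λ] N) (g : M' →ₗ[Γ] N') (m : M) (m' : M') :
    tmap (K := K) f g (m ⊗ₜ m') = f m ⊗ₜ g m' := rfl

lemma hom_ext' {M M' Z : Type*} [AddCommGroup M] [Module K M] [Module Λ M] [IsScalarTower K Λ M]
    [AddCommGroup M'] [Module K M'] [Module Γ M'] [IsScalarTower K Γ M']
    [AddCommGroup Z] [Module (Λ ⊗[K] Γ) Z] {f g : M ⊗[K] M' →ₗ[Λ ⊗[K] Γ] Z}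
    (h : ∀ m m', f (m ⊗ₜ m') = g (m ⊗ₜ m')) : f = g := by
  ext x
  induction x using TensorProduct.induction_on with
  | zero => simp
  | add x y hx hy => simp [hx, hy]
  | tmul m n => exact h m n

variable (K)
/-- External tensor product of objects. -/
noncomputable def tob (X : ModuleCat.{u} Λ) (X' : ModuleCat.{u} Γ) :
    ModuleCat.{u} (Λ ⊗[K] Γ) := ModuleCat.of (Λ ⊗[K] Γ) (X ⊗[K] X')

noncomputable def thom {X Y : ModuleCat.{u} Λ} {X' Y' : ModuleCat.{u} Γ} (f : X ⟶ Y) (g : X' ⟶ Y') :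
    tob K X X' ⟶ tob K Y Y' := ModuleCat.ofHom (tmap f.hom g.hom)

lemma thom_tmul {X Y : ModuleCat.{u} Λ} {X' Y' : ModuleCat.{u} Γ} (f : X ⟶ Y) (g : X' ⟶ Y')
    (x : X) (x' : X') : (thom K f g).hom (x ⊗ₜ x' : X ⊗[K] X') = (f.hom x ⊗ₜ g.hom x' : Y ⊗[K] Y') := rfl

lemma thom_ext {X : ModuleCat.{u} Λ} {X' : ModuleCat.{u} Γ} {Z : ModuleCat.{u} (Λ ⊗[K] Γ)}
    {f g : tob K X X' ⟶ Z} (h : ∀ x x', f.hom (x ⊗ₜ x' : X ⊗[K] X') = g.hom (x ⊗ₜ x' : X ⊗[K] X')) :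
    f = g := ModuleCat.hom_ext (hom_ext' h)

lemma thom_comp {X Y Z : ModuleCat.{u} Λ} {X' Y' Z' : ModuleCat.{u} Γ} (f : X ⟶ Y) (g : X' ⟶ Y')
    (f' : Y ⟶ Z) (g' : Y' ⟶ Z') : thom K (f ≫ f') (g ≫ g') = thom K f g ≫ thom K f' g' :=
  thom_ext K fun _ _ => rfl

lemma thom_id (X : ModuleCat.{u} Λ) (X' : ModuleCat.{u} Γ) :
    thom K (𝟙 X) (𝟙 X') = 𝟙 _ :=
  thom_ext K fun _ _ => rfl

lemma thom_add_left {X Y : ModuleCat.{u} Λ} {X' Y' : ModuleCat.{u} Γ} (f f' : X ⟶ Y) (g : X' ⟶ Y') :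
    thom K (f + f') g = thom K f g + thom K f' g :=
  thom_ext K fun _ _ => TensorProduct.add_tmul _ _ _

lemma thom_add_right {X Y : ModuleCat.{u} Λ} {X' Y' : ModuleCat.{u} Γ} (f : X ⟶ Y) (g g' : X' ⟶ Y') :
    thom K f (g + g') = thom K f g + thom K f g' :=
  thom_ext K fun _ _ => TensorProduct.tmul_add _ _ _

lemma hom_smul_apply {A : Type u} [Ring A] [Algebra K A] {X Y : ModuleCat.{u} A} (r : K) (f : X ⟶ Y)
    (x : X) : (r • f).hom x = algebraMap K A r • f.hom x := rfl

lemma smul_tob {X : ModuleCat.{u} Λ} {X' : ModuleCat.{u} Γ} (r : K) (x : X ⊗[K] X') :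
    algebraMap K (Λ ⊗[K] Γ) r • x = r • x := by
  rw [algebraMap_smul]

lemma thom_smul_left {X Y : ModuleCat.{u} Λ} {X' Y' : ModuleCat.{u} Γ} (r : K) (f : X ⟶ Y)
    (g : X' ⟶ Y') : thom K (r • f) g = r • thom K f g :=
  thom_ext K fun x x' => by
    exact (TensorProduct.smul_tmul' r (f.hom x) (g.hom x')).symm.trans (smul_tob K r _).symm

lemma thom_smul_right {X Y : ModuleCat.{u} Λ} {X' Y' : ModuleCat.{u} Γ} (r : K) (f : X ⟶ Y)
    (g : X' ⟶ Y') : thom K f (r • g) = r • thom K f g :=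
  thom_ext K fun x x' => by
    exact (TensorProduct.tmul_smul r (f.hom x) (g.hom x')).trans (smul_tob K r _).symm

/-- Tensoring on the right with a fixed module. -/
@[simps] noncomputable def TF (Λ : Type u) [Ring Λ] [Algebra K Λ] (X' : ModuleCat.{u} Γ) :
    ModuleCat.{u} Λ ⥤ ModuleCat.{u} (Λ ⊗[K] Γ) where
  obj X := tob K X X'
  map f := thom K f (𝟙 X')
  map_id X := thom_id K X X'
  map_comp f g := by rw [← thom_comp, Category.comp_id]

/-- Tensoring on the left with a fixed module. -/
@[simps] noncomputable def TG (Γ : Type u) [Ring Γ] [Algebra K Γ] (X : ModuleCat.{u} Λ) :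
    ModuleCat.{u} Γ ⥤ ModuleCat.{u} (Λ ⊗[K] Γ) where
  obj X' := tob K X X'
  map f := thom K (𝟙 X) f
  map_id X' := thom_id K X X'
  map_comp f g := by rw [← thom_comp, Category.comp_id]

instance (X' : ModuleCat.{u} Γ) : (TF K Λ X').Additive where
  map_add := thom_add_left _ _ _ _
instance (X : ModuleCat.{u} Λ) : (TG K Γ X).Additive where
  map_add := thom_add_right _ _ _ _
instance (X' : ModuleCat.{u} Γ) : (TF K Λ X').Linear K where
  map_smul _ _ := thom_smul_left _ _ _ _
instance (X : ModuleCat.{u} Λ) : (TG K Γ X).Linear K where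
  map_smul _ _ := thom_smul_right _ _ _ _

lemma TF_exact (X' : ModuleCat.{u} Γ) (S : ShortComplex (ModuleCat.{u} Λ)) (hS : S.ShortExact) :
    (S.map (TF K Λ X')).ShortExact := by
  have h1 := (ShortComplex.ShortExact.moduleCat_exact_iff_function_exact _).1 hS.exact
  apply ModuleCat.shortComplex_shortExact
  · exact rTensor_exact X' (f := S.f.hom.restrictScalars K) (g := S.g.hom.restrictScalars K) h1
      hS.moduleCat_surjective_g
  · exact Module.Flat.rTensor_preserves_injective_linearMap (S.f.hom.restrictScalars K)
      hS.moduleCat_injective_f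
  · exact LinearMap.rTensor_surjective X' (g := S.g.hom.restrictScalars K) hS.moduleCat_surjective_g

lemma TG_exact (X : ModuleCat.{u} Λ) (S : ShortComplex (ModuleCat.{u} Γ)) (hS : S.ShortExact) :
    (S.map (TG K Γ X)).ShortExact := by
  have h1 := (ShortComplex.ShortExact.moduleCat_exact_iff_function_exact _).1 hS.exact
  apply ModuleCat.shortComplex_shortExact
  · exact lTensor_exact X (f := S.f.hom.restrictScalars K) (g := S.g.hom.restrictScalars K) h1
      hS.moduleCat_surjective_g
  · exact Module.Flat.lTensor_preserves_injective_linearMap (S.f.hom.restrictScalars K)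
      hS.moduleCat_injective_f
  · exact LinearMap.lTensor_surjective X (g := S.g.hom.restrictScalars K) hS.moduleCat_surjective_g

lemma pres_of_exact {C D : Type*} [Category* C] [Category* D] [Abelian C] [Abelian D] (F : C ⥤ D)
    [F.Additive] (h : ∀ S : ShortComplex C, S.ShortExact → (S.map F).ShortExact) :
    PreservesFiniteLimits F ∧ PreservesFiniteColimits F :=
  ((Functor.exact_tfae F).out 0 3).1 h

instance (X' : ModuleCat.{u} Γ) : PreservesFiniteLimits (TF K Λ X') :=
  (pres_of_exact _ (TF_exact K X')).1
instance (X' : ModuleCat.{u} Γ) : PreservesFiniteColimits (TF K Λ X') :=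
  (pres_of_exact _ (TF_exact K X')).2
instance (X : ModuleCat.{u} Λ) : PreservesFiniteLimits (TG K Γ X) :=
  (pres_of_exact _ (TG_exact K X)).1
instance (X : ModuleCat.{u} Λ) : PreservesFiniteColimits (TG K Γ X) :=
  (pres_of_exact _ (TG_exact K X)).2

end A

section B
variable {K A : Type u} [Field K] [Ring A] [Algebra K A]

lemma extMk_zero_deg {X Y : ModuleCat.{u} A} (R : ProjectiveResolution X) (f : R.complex.X 0 ⟶ Y)
    (hf : R.complex.d 1 0 ≫ f = 0) : R.extMk f 1 rfl hf = 0 ↔ f = 0 := by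
  constructor
  · intro h
    rw [← R.extEquivCohomologyClass.apply_eq_iff_eq,
      R.extEquivCohomologyClass_extMk, R.extEquivCohomologyClass_zero,
      CochainComplex.HomComplex.CohomologyClass.mk_eq_zero_iff,
      CochainComplex.HomComplex.Cocycle.toSingleMk_mem_coboundaries_iff _ _ _ _ _ 1 (by simp)] at h
    obtain ⟨g, hg⟩ := h
    have hz : R.cochainComplex.d (-((0 : ℕ) : ℤ)) 1 = 0 :=
      (R.cochainComplex.isZero_of_isStrictlyLE 0 1 (by simp)).eq_of_tgt _ _
    rw [hz, Limits.zero_comp] at hg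
    rw [← cancel_epi (R.cochainComplexXIso (-(0 : ℕ)) 0 rfl).hom, ← hg, Limits.comp_zero]
  · rintro rfl
    exact R.extMk_zero 1 rfl

lemma smul_extMk {X Y : ModuleCat.{u} A} (R : ProjectiveResolution X) {n : ℕ}
    (f : R.complex.X n ⟶ Y) (m : ℕ) (hm : n + 1 = m) 
    (hf : R.complex.d m n ≫ f = 0) (r : K) :
    r • R.extMk f m hm hf = R.extMk (r • f) m hm (by rw [Linear.comp_smul, hf, smul_zero]) := by
  rw [Ext.smul_eq_comp_mk₀, R.extMk_comp_mk₀]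
  simp only [Linear.comp_smul, Category.comp_id]

lemma homology_equiv (D : CochainComplex (ModuleCat.{u} K) ℕ) (n : ℕ) (V : Type u)
    [AddCommGroup V] [Module K V] (φ : LinearMap.ker (D.d n (n + 1)).hom →ₗ[K] V)
    (hφ : Function.Surjective φ)
    (hk : ∀ z, φ z = 0 ↔ ∃ y, (D.d ((ComplexShape.up ℕ).prev n) n).hom y = z.1) :
    Nonempty (D.homology n ≃ₗ[K] V) := by
  let S := D.sc' ((ComplexShape.up ℕ).prev n) n (n + 1)
  let e1 : D.homology n ≅ S.homology := D.homologyIsoSc' _ n (n + 1) rfl (by simp)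
  let e2 := (e1 ≪≫ S.moduleCatHomologyIso).toLinearEquiv
  refine ⟨e2.trans ((Submodule.quotEquivOfEq _ _ ?_).trans (φ.quotKerEquivOfSurjective hφ))⟩
  ext z
  refine Iff.trans ?_ (hk z).symm
  exact ⟨fun ⟨y, h⟩ => ⟨y, congrArg Subtype.val h⟩, fun ⟨y, h⟩ => ⟨y, Subtype.ext h⟩⟩

variable (K) in
/-- `extMk` as a linear map out of the cocycles. -/
noncomputable def extMkL {X Y : ModuleCat.{u} A} (R : ProjectiveResolution X) (n : ℕ) :
    LinearMap.ker ((R.complex.linearYonedaObj K Y).d n (n + 1)).hom →ₗ[K] Ext.{u} X Y n where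
  toFun z := R.extMk (Y := Y) z.1 (n + 1) rfl z.2
  map_add' x y := (R.add_extMk _ _ _ _ _ _).symm
  map_smul' r x := (smul_extMk R _ _ _ _ _).symm

lemma ext_bridge (X Y : ModuleCat.{u} A) (n : ℕ) :
    Nonempty (((_root_.Ext K (ModuleCat.{u} A) n).obj (Opposite.op X)).obj Y ≃ₗ[K]
      Ext.{u} X Y n) := by
  let R := projectiveResolution X
  obtain ⟨e⟩ := homology_equiv (R.complex.linearYonedaObj K Y) n (Ext.{u} X Y n) (extMkL K R n)
    (fun α => by
      obtain ⟨f, hf, rfl⟩ := R.extMk_surjective α (n + 1) rfl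
      exact ⟨⟨f, hf⟩, rfl⟩)
    (fun ⟨z, hz⟩ => by
      cases n with
      | zero =>
        refine (extMk_zero_deg R z hz).trans ?_
        have : (R.complex.linearYonedaObj K Y).d ((ComplexShape.up ℕ).prev 0) 0 = 0 :=
          HomologicalComplex.shape _ _ _ (by simp)
        rw [this]
        exact ⟨fun h => ⟨0, h.symm⟩, fun ⟨y, h⟩ => h.symm⟩
      | succ n =>
        refine (R.extMk_eq_zero_iff z (n + 1 + 1) rfl hz n rfl).trans ?_
        have : (ComplexShape.up ℕ).prev (n + 1) = n := by simp
        rw [this]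
        rfl)
  exact ⟨(R.isoExt n Y).toLinearEquiv.trans e⟩

end B

section C1
variable {K A : Type u} [Field K] [Ring A] [Algebra K A]

variable (K) in
/-- Precomposition with an extension class, as a linear map. -/
noncomputable def pre {X Z : ModuleCat.{u} A} {a : ℕ} (γ : Ext.{u} X Z a) (Y : ModuleCat.{u} A)
    {b c : ℕ} (h : a + b = c) : Ext.{u} Z Y b →ₗ[K] Ext.{u} X Y c :=
  γ.precompOfLinear K Y h

lemma pre_apply {X Z : ModuleCat.{u} A} {a : ℕ} (γ : Ext.{u} X Z a) (Y : ModuleCat.{u} A)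
    {b c : ℕ} (h : a + b = c) (α : Ext.{u} Z Y b) : pre K γ Y h α = γ.comp α h := rfl

variable {S : ShortComplex (ModuleCat.{u} A)} (hS : S.ShortExact) (Y : ModuleCat.{u} A)

variable (K) in
lemma pre_exact2 (hS : S.ShortExact) (Y : ModuleCat.{u} A) (n : ℕ) :
    Function.Exact (pre K (Ext.mk₀ S.g) Y (zero_add n)) (pre K (Ext.mk₀ S.f) Y (zero_add n)) :=
  fun x => ⟨fun h => Ext.contravariant_sequence_exact₂ hS Y x h, by
    rintro ⟨y, rfl⟩
    simp only [pre_apply, Ext.mk₀_comp_mk₀_assoc, ShortComplex.zero, Ext.mk₀_zero, Ext.zero_comp]⟩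

variable (K) in
lemma pre_exact1 {n₀ n₁ : ℕ} (h : 1 + n₀ = n₁) :
    Function.Exact (pre K (Ext.mk₀ S.f) Y (zero_add n₀)) (pre K hS.extClass Y h) :=
  fun x => ⟨fun hx => Ext.contravariant_sequence_exact₁ hS Y x h hx, by
    rintro ⟨y, rfl⟩
    simp only [pre_apply, ShortComplex.ShortExact.extClass_comp_assoc]⟩

variable (K) in
lemma pre_exact3 {n₀ n₁ : ℕ} (h : 1 + n₀ = n₁) :
    Function.Exact (pre K hS.extClass Y h) (pre K (Ext.mk₀ S.g) Y (zero_add n₁)) :=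
  fun x => ⟨fun hx => Ext.contravariant_sequence_exact₃ hS Y x hx h, by
    rintro ⟨y, rfl⟩
    simp only [pre_apply, ShortComplex.ShortExact.comp_extClass_assoc]⟩

variable (K) in
lemma pre_inj (hS : S.ShortExact) (Y : ModuleCat.{u} A) : Function.Injective (pre K (Ext.mk₀ S.g) Y (zero_add 0)) :=
  haveI := hS.epi_g
  Ext.precomp_mk₀_injective_of_epi Y S.g

end C1

section C2
variable {K Λ Γ : Type u} [Field K] [Ring Λ] [Ring Γ] [Algebra K Λ] [Algebra K Γ]

section
variable (K) (X Y : ModuleCat.{u} Λ) (X' Y' : ModuleCat.{u} Γ)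

/-- The cross product. -/
noncomputable def cross {i j p : ℕ} (h : i + j = p) :
    Ext.{u} X Y i →ₗ[K] Ext.{u} X' Y' j →ₗ[K] Ext.{u} (tob K X X') (tob K Y Y') p :=
  ((Ext.bilinearCompOfLinear K (tob K X X') (tob K Y X') (tob K Y Y') i j p h).compl₁₂
    ((TF K Λ X').mapExtLinearMap K X Y i) ((TG K Γ Y).mapExtLinearMap K X' Y' j))

/-- The linearized cross product. -/
noncomputable def crossL {i j p : ℕ} (h : i + j = p) :
    Ext.{u} X Y i ⊗[K] Ext.{u} X' Y' j →ₗ[K] Ext.{u} (tob K X X') (tob K Y Y') p :=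
  TensorProduct.lift (cross K X Y X' Y' h)
end

variable {X Y Z : ModuleCat.{u} Λ} {X' Y' Z' : ModuleCat.{u} Γ}

variable (K) in
/-- functoriality of Ext in the first tensor factor -/
noncomputable def mF (X' : ModuleCat.{u} Γ) {i : ℕ} (α : Ext.{u} X Y i) :
  Ext.{u} (tob K X X') (tob K Y X') i := α.mapExactFunctor (TF K Λ X')

variable (K) in
/-- functoriality of Ext in the second tensor factor -/
noncomputable def mG (X : ModuleCat.{u} Λ) {i : ℕ} (α : Ext.{u} X' Y' i) :
  Ext.{u} (tob K X X') (tob K X Y') i := α.mapExactFunctor (TG K Γ X)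

lemma mF_comp {a b c : ℕ} (α : Ext.{u} X Y a) (β : Ext.{u} Y Z b) (h : a + b = c) :
    mF K X' (α.comp β h) = (mF K X' α).comp (mF K X' β) h :=
  Ext.mapExactFunctor_comp _ _ _ _
lemma mG_comp {a b c : ℕ} (α : Ext.{u} X' Y' a) (β : Ext.{u} Y' Z' b) (h : a + b = c) :
    mG K X (α.comp β h) = (mG K X α).comp (mG K X β) h :=
  Ext.mapExactFunctor_comp _ _ _ _
lemma mF_mk₀ (f : X ⟶ Y) : mF K X' (Ext.mk₀ f) = Ext.mk₀ (thom K f (𝟙 X')) :=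
  Ext.mapExactFunctor_mk₀ _ _
lemma mG_mk₀ (f : X' ⟶ Y') : mG K X (Ext.mk₀ f) = Ext.mk₀ (thom K (𝟙 X) f) :=
  Ext.mapExactFunctor_mk₀ _ _
lemma mF_extClass {S : ShortComplex (ModuleCat.{u} Λ)} (hS : S.ShortExact) :
    mF K X' hS.extClass = (TF_exact K X' S hS).extClass :=
  Ext.mapExactFunctor_extClass _ _
lemma mG_extClass {S : ShortComplex (ModuleCat.{u} Γ)} (hS : S.ShortExact) :
    mG K X hS.extClass = (TG_exact K X S hS).extClass :=
  Ext.mapExactFunctor_extClass _ _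

lemma crossL_tmul {i j p : ℕ} (h : i + j = p) (α : Ext.{u} X Y i) (β : Ext.{u} X' Y' j) :
    crossL K X Y X' Y' h (α ⊗ₜ β) = (mF K X' α).comp (mG K Y β) h := rfl

/-- Compatibility with precomposition in the first variable. -/
lemma crossL_pre_left {a i i' j p p' : ℕ} (γ : Ext.{u} X Z a) (hi : a + i = i') (h : i + j = p)
    (h' : i' + j = p') (hp : a + p = p') :
    crossL K X Y X' Y' h' ∘ₗ (pre K γ Y hi).rTensor _ =
      pre K (mF K X' γ) (tob K Y Y') hp ∘ₗ crossL K Z Y X' Y' h := by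
  ext α β
  simp only [AlgebraTensorModule.curry_apply, curry_apply, LinearMap.coe_restrictScalars,
    LinearMap.comp_apply, LinearMap.rTensor_tmul, crossL_tmul, pre_apply, mF_comp]
  exact Ext.comp_assoc _ _ _ _ _ (by omega)

lemma mk₀_mG_comm_mk₀ (a : X ⟶ Y) (f : X' ⟶ Z') :
    (mF K X' (Ext.mk₀ a)).comp (mG K Y (Ext.mk₀ f)) (zero_add 0) =
      (mG K X (Ext.mk₀ f)).comp (mF K Z' (Ext.mk₀ a)) (add_zero 0) := by
  simp only [mF_mk₀, mG_mk₀, Ext.mk₀_comp_mk₀, ← thom_comp, Category.comp_id, Category.id_comp]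

lemma mk₀_mG_comm_ext (a : X ⟶ Y) {S : ShortComplex (ModuleCat.{u} Γ)} (hS : S.ShortExact) :
    (mF K S.X₃ (Ext.mk₀ a)).comp (mG K Y hS.extClass) (zero_add 1) =
      (mG K X hS.extClass).comp (mF K S.X₁ (Ext.mk₀ a)) (add_zero 1) := by
  simp only [mF_mk₀, mG_extClass]
  exact (ShortComplex.ShortExact.extClass_naturality (TG_exact K X S hS) (TG_exact K Y S hS)
    { τ₁ := thom K a (𝟙 _), τ₂ := thom K a (𝟙 _), τ₃ := thom K a (𝟙 _)
      comm₁₂ := by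
        change thom K a (𝟙 _) ≫ thom K (𝟙 _) S.f = thom K (𝟙 _) S.f ≫ thom K a (𝟙 _)
        simp only [← thom_comp, Category.comp_id, Category.id_comp]
      comm₂₃ := by
        change thom K a (𝟙 _) ≫ thom K (𝟙 _) S.g = thom K (𝟙 _) S.g ≫ thom K a (𝟙 _)
        simp only [← thom_comp, Category.comp_id, Category.id_comp] }).symm

/-- Compatibility with precomposition in the second variable. -/
lemma crossL_pre_right {c j j' : ℕ} (γ : Ext.{u} X' Z' c)
    (hγ : ∀ a : X ⟶ Y, (mF K X' (Ext.mk₀ a)).comp (mG K Y γ) (zero_add c) =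
      (mG K X γ).comp (mF K Z' (Ext.mk₀ a)) (add_zero c)) (hj : c + j = j') :
    crossL K X Y X' Y' (zero_add j') ∘ₗ (pre K γ Y' hj).lTensor _ =
      pre K (mG K X γ) (tob K Y Y') hj ∘ₗ crossL K X Y Z' Y' (zero_add j) := by
  ext α β
  obtain ⟨a, rfl⟩ := (Ext.mk₀_bijective X Y).2 α
  simp only [AlgebraTensorModule.curry_apply, curry_apply, LinearMap.coe_restrictScalars,
    LinearMap.comp_apply, LinearMap.lTensor_tmul, crossL_tmul, pre_apply, mG_comp]
  rw [← Ext.comp_assoc (a₁₂ := c) _ _ _ (by omega) (by omega) (by omega), hγ]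
  exact Ext.comp_assoc _ _ _ _ _ (by omega)

end C2

section E
variable {K Λ Γ : Type u} [Field K] [Ring Λ] [Ring Γ] [Algebra K Λ] [Algebra K Γ]

lemma exists_pres [IsNoetherianRing Λ] (X : ModuleCat.{u} Λ) [Module.Finite Λ X] :
    ∃ (S : ShortComplex (ModuleCat.{u} Λ)), S.ShortExact ∧ S.X₃ = X ∧ Module.Finite Λ S.X₁ ∧
      ∃ n : ℕ, Nonempty (Module.Basis (Fin n) Λ S.X₂) := by
  obtain ⟨n, f, hf⟩ := Module.Finite.exists_fin' Λ X
  refine ⟨f.shortComplexKer, LinearMap.shortExact_shortComplexKer hf, rfl, ?_, n,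
    ⟨Pi.basisFun Λ (Fin n)⟩⟩
  exact inferInstanceAs (Module.Finite Λ (LinearMap.ker f))

section basis
variable {P Q : Type u} {ι κ : Type} [Fintype ι] [Fintype κ]
    [AddCommGroup P] [Module K P] [Module Λ P] [IsScalarTower K Λ P]
    [AddCommGroup Q] [Module K Q] [Module Γ Q] [IsScalarTower K Γ Q]

variable (K) in
/-- coordinate function -/
noncomputable def tcoord (f : P →ₗ[Λ] Λ) (g : Q →ₗ[Γ] Γ) : P ⊗[K] Q →ₗ[Λ ⊗[K] Γ] Λ ⊗[K] Γ where
  toFun := TensorProduct.map (f.restrictScalars K) (g.restrictScalars K)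
  map_add' := map_add _
  map_smul' a x := by
    induction a using TensorProduct.induction_on with
    | zero => simp
    | add a b ha hb => simp only [add_smul, map_add, ha, hb, RingHom.id_apply]
    | tmul a b =>
      induction x using TensorProduct.induction_on with
      | zero => simp
      | add x y hx hy => simp only [smul_add, map_add, hx, hy]
      | tmul m n => simp [tensorTensor_smul_tmul]

lemma tcoord_tmul (f : P →ₗ[Λ] Λ) (g : Q →ₗ[Γ] Γ) (x : P) (y : Q) :
    tcoord K f g (x ⊗ₜ y) = f x ⊗ₜ g y := rfl

/-- The tensor product basis. -/
noncomputable def tbasisEquiv (b : Module.Basis ι Λ P) (c : Module.Basis κ Γ Q) :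
    (P ⊗[K] Q) ≃ₗ[Λ ⊗[K] Γ] (ι × κ → Λ ⊗[K] Γ) := by
  classical
  exact LinearEquiv.ofLinearMap
    (LinearMap.pi fun ik => tcoord K (b.coord ik.1) (c.coord ik.2))
    (∑ ik : ι × κ, LinearMap.smulRight (LinearMap.proj ik) (b ik.1 ⊗ₜ[K] c ik.2))
    (by
      apply LinearMap.pi_ext'
      intro ik
      refine LinearMap.ext_ring ?_
      funext ik'
      simp only [LinearMap.comp_apply, LinearMap.sum_apply, LinearMap.smulRight_apply,
        LinearMap.proj_apply, LinearMap.single_apply, map_sum, LinearMap.id_apply,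
        LinearMap.pi_apply, Finset.sum_apply, map_smul, Pi.smul_apply, tcoord_tmul]
      rw [Finset.sum_eq_single ik]
      · rcases ik with ⟨i, k⟩
        rcases ik' with ⟨i', k'⟩
        simp only [Module.Basis.coord_apply, Module.Basis.repr_self, Pi.single_eq_same, one_smul]
        by_cases hi : i = i'
        · subst hi
          by_cases hk : k = k'
          · subst hk
            simp [Algebra.TensorProduct.one_def]
          · rw [Pi.single_eq_of_ne (by simpa using Ne.symm hk), Finsupp.single_eq_of_ne (Ne.symm hk), tmul_zero]
        · rw [Pi.single_eq_of_ne (by intro h; exact hi (congrArg Prod.fst h).symm), Finsupp.single_eq_of_ne (Ne.symm hi), zero_tmul]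
      · intro jk _ hne
        rw [Pi.single_eq_of_ne hne, zero_smul]
      · simp)
    (hom_ext' fun x y => by
      simp only [LinearMap.comp_apply, LinearMap.sum_apply, LinearMap.smulRight_apply,
        LinearMap.proj_apply, LinearMap.id_apply, LinearMap.pi_apply, tcoord_tmul,
        tensorTensor_smul_tmul]
      conv_rhs => rw [← b.sum_repr x, ← c.sum_repr y]
      rw [TensorProduct.sum_tmul, Fintype.sum_prod_type]
      simp only [TensorProduct.tmul_sum]
      rfl)

/-- The tensor product basis. -/
noncomputable def tbasis (b : Module.Basis ι Λ P) (c : Module.Basis κ Γ Q) :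
    Module.Basis (ι × κ) (Λ ⊗[K] Γ) (P ⊗[K] Q) := Module.Basis.ofEquivFun (tbasisEquiv b c)

lemma tbasis_apply (b : Module.Basis ι Λ P) (c : Module.Basis κ Γ Q) (ik : ι × κ) :
    tbasis (K := K) b c ik = b ik.1 ⊗ₜ c ik.2 := by
  classical
  rw [tbasis, Module.Basis.coe_ofEquivFun]
  simp only [tbasisEquiv, LinearEquiv.symm_ofLinearMap, LinearEquiv.coe_ofLinearMap, LinearMap.sum_apply,
    LinearMap.smulRight_apply, LinearMap.proj_apply]
  rw [Finset.sum_eq_single ik]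
  · rw [Pi.single_eq_same, one_smul]
  · intro jk _ hne
    rw [Pi.single_eq_of_ne hne, zero_smul]
  · simp

end basis

section ev
variable {A : Type u} [Ring A] [Algebra K A] {ι : Type}

variable (K) in
/-- evaluation on a family -/
noncomputable def ev {P : ModuleCat.{u} A} (b : ι → P) (Y : ModuleCat.{u} A) :
    Ext.{u} P Y 0 →ₗ[K] (ι → Y) where
  toFun α i := (Ext.linearEquiv₀ (R := K) α).hom (b i)
  map_add' α β := by funext i; simp
  map_smul' r α := by funext i; rw [map_smul]; rfl

lemma ev_mk₀ {P Y : ModuleCat.{u} A} (b : ι → P) (f : P ⟶ Y) (i : ι) :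
    ev K b Y (Ext.mk₀ f) i = f.hom (b i) := by
  have : Ext.linearEquiv₀ (R := K) (Ext.mk₀ f) = f :=
    Ext.linearEquiv₀.symm_apply_eq.1 rfl |>.symm
  simp only [ev, LinearMap.coe_mk, AddHom.coe_mk, this]

lemma ev_bij {P : ModuleCat.{u} A} (b : Module.Basis ι A P) (Y : ModuleCat.{u} A) :
    Function.Bijective (ev K b Y) := by
  constructor
  · intro α β h
    obtain ⟨f, rfl⟩ := (Ext.mk₀_bijective P Y).2 α
    obtain ⟨g, rfl⟩ := (Ext.mk₀_bijective P Y).2 β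
    congr 1
    refine ModuleCat.hom_ext (b.ext fun i => ?_)
    simpa only [ev_mk₀] using congrFun h i
  · intro y
    refine ⟨Ext.mk₀ (ModuleCat.ofHom (b.constr ℕ y)), ?_⟩
    funext i
    rw [ev_mk₀]
    simp

end ev

section T
variable {V W ι κ : Type*} [Fintype ι] [Fintype κ] [AddCommGroup V] [AddCommGroup W] [Module K V]
  [Module K W]

lemma T_bij : Function.Bijective (LinearMap.pi fun ik : ι × κ =>
    TensorProduct.map (LinearMap.proj (R := K) (φ := fun _ : ι => V) ik.1)
      (LinearMap.proj (R := K) (φ := fun _ : κ => W) ik.2)) := by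
  classical
  let g : (ι × κ → V ⊗[K] W) →ₗ[K] (ι → V) ⊗[K] (κ → W) := ∑ ik : ι × κ, TensorProduct.map
    (LinearMap.single K (fun _ : ι => V) ik.1) (LinearMap.single K (fun _ : κ => W) ik.2) ∘ₗ
      LinearMap.proj ik
  refine Function.bijective_iff_has_inverse.2
    ⟨g, fun x => LinearMap.congr_fun (g := LinearMap.id) (f := g ∘ₗ LinearMap.pi fun ik : ι × κ =>
    TensorProduct.map (LinearMap.proj (R := K) (φ := fun _ : ι => V) ik.1)
      (LinearMap.proj (R := K) (φ := fun _ : κ => W) ik.2)) ?_ x,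
      fun x => LinearMap.congr_fun (g := LinearMap.id) (f := (LinearMap.pi fun ik : ι × κ =>
    TensorProduct.map (LinearMap.proj (R := K) (φ := fun _ : ι => V) ik.1)
      (LinearMap.proj (R := K) (φ := fun _ : κ => W) ik.2)) ∘ₗ g) ?_ x⟩ <;> dsimp only [g]
  swap
  · apply LinearMap.pi_ext'
    intro ik
    ext v w ik'
    rcases ik with ⟨i, k⟩
    rcases ik' with ⟨i', k'⟩
    simp only [AlgebraTensorModule.curry_apply, curry_apply, LinearMap.coe_restrictScalars,
      LinearMap.comp_apply, LinearMap.sum_apply, LinearMap.proj_apply, LinearMap.single_apply,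
      map_sum, LinearMap.id_apply, LinearMap.pi_apply, Finset.sum_apply]
    rw [Finset.sum_eq_single (i, k)]
    · rw [Pi.single_eq_same, map_tmul, map_tmul]
      simp only [LinearMap.single_apply, LinearMap.proj_apply]
      by_cases hi : i = i'
      · subst hi
        by_cases hk : k = k'
        · subst hk
          simp
        · rw [Pi.single_eq_of_ne (Ne.symm hk), tmul_zero,
            Pi.single_eq_of_ne (fun h => hk (congrArg Prod.snd h).symm)]
      · rw [Pi.single_eq_of_ne (Ne.symm hi), zero_tmul,
          Pi.single_eq_of_ne (fun h => hi (congrArg Prod.fst h).symm)]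
    · intro jk _ hne
      rw [Pi.single_eq_of_ne hne, map_zero, map_zero]
    · simp
  · refine TensorProduct.ext' fun x y => ?_
    simp only [LinearMap.comp_apply, LinearMap.sum_apply, LinearMap.proj_apply, LinearMap.id_apply,
      LinearMap.pi_apply, map_tmul, LinearMap.single_apply]
    conv_rhs => rw [← Finset.univ_sum_single x, ← Finset.univ_sum_single y]
    rw [TensorProduct.sum_tmul, Fintype.sum_prod_type]
    simp only [TensorProduct.tmul_sum]

end T

variable {P Y : ModuleCat.{u} Λ} {Q Y' : ModuleCat.{u} Γ} {ι κ : Type} [Fintype ι] [Fintype κ]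

lemma tob_projective (b : Module.Basis ι Λ P) (c : Module.Basis κ Γ Q) :
    Projective (tob K P Q) := by
  have := Module.Projective.of_basis (tbasis (K := K) b c)
  exact (IsProjective.iff_projective (R := Λ ⊗[K] Γ) (P ⊗[K] Q)).1 this

lemma step1 (b : Module.Basis ι Λ P) (c : Module.Basis κ Γ Q) :
    Function.Bijective (crossL K P Y Q Y' (zero_add 0)) := by
  have h1 := ev_bij (K := K) (P := tob K P Q) (tbasis (K := K) b c) (tob K Y Y')
  rw [← Function.Bijective.of_comp_iff' h1]
  have h2 := (TensorProduct.congr (LinearEquiv.ofBijective _ (ev_bij (K := K) b Y))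
    (LinearEquiv.ofBijective _ (ev_bij (K := K) c Y'))).bijective
  have h3 := (T_bij (K := K) (ι := ι) (κ := κ) (V := Y) (W := Y')).comp h2
  refine (congrArg Function.Bijective (?_ : _ = (_ : _ → ι × κ → (Y ⊗[K] Y' : Type u)))).mpr h3
  funext x
  simp only [Function.comp_apply]
  induction x using TensorProduct.induction_on with
  | zero => simp only [map_zero]; rfl
  | add x y hx hy => 
    simp only [map_add, hx, hy]; rfl
  | tmul α β =>
    obtain ⟨f, rfl⟩ := (Ext.mk₀_bijective _ _).2 α
    obtain ⟨g, rfl⟩ := (Ext.mk₀_bijective _ _).2 β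
    funext ik
    rw [crossL_tmul, mF_mk₀, mG_mk₀, Ext.mk₀_comp_mk₀, ev_mk₀, ← thom_comp, Category.comp_id, Category.id_comp]
    refine (congrArg (thom K f g).hom (tbasis_apply b c ik)).trans ((thom_tmul K f g _ _).trans ?_)
    simp only [TensorProduct.congr_tmul, LinearMap.pi_apply, map_tmul, LinearMap.proj_apply,
      LinearEquiv.ofBijective_apply, ev_mk₀]
    rfl

end E

section F
variable {K Λ Γ : Type u} [Field K] [Ring Λ] [Ring Γ] [Algebra K Λ] [Algebra K Γ]

lemma proj_of_basis {A : Type u} [Ring A] {P : ModuleCat.{u} A} {ι : Type}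
    (b : Module.Basis ι A P) : Projective P := by
  have := Module.Projective.of_basis b
  exact P.projective_of_categoryTheory_projective

section G
variable (P : ModuleCat.{u} Λ) {S : ShortComplex (ModuleCat.{u} Γ)} (hS : S.ShortExact)
  (Z : ModuleCat.{u} (Λ ⊗[K] Γ))

lemma G_exact2 (hS : S.ShortExact)
    (Z : ModuleCat.{u} (Λ ⊗[K] Γ)) (n : ℕ) :
    Function.Exact (pre K (mG K P (Ext.mk₀ S.g)) Z (zero_add n))
      (pre K (mG K P (Ext.mk₀ S.f)) Z (zero_add n)) := by
  rw [mG_mk₀, mG_mk₀]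
  exact pre_exact2 K (TG_exact K P S hS) Z n

lemma G_exact1 {n₀ n₁ : ℕ} (h : 1 + n₀ = n₁) :
    Function.Exact (pre K (mG K P (Ext.mk₀ S.f)) Z (zero_add n₀))
      (pre K (mG K P hS.extClass) Z h) := by
  rw [mG_mk₀, mG_extClass]
  exact pre_exact1 K (TG_exact K P S hS) Z h

lemma G_exact3 {n₀ n₁ : ℕ} (h : 1 + n₀ = n₁) :
    Function.Exact (pre K (mG K P hS.extClass) Z h)
      (pre K (mG K P (Ext.mk₀ S.g)) Z (zero_add n₁)) := by
  rw [mG_mk₀, mG_extClass]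
  exact pre_exact3 K (TG_exact K P S hS) Z h

lemma G_inj (hS : S.ShortExact)
    (Z : ModuleCat.{u} (Λ ⊗[K] Γ)) : Function.Injective (pre K (mG K P (Ext.mk₀ S.g)) Z (zero_add 0)) := by
  rw [mG_mk₀]
  exact pre_inj K (TG_exact K P S hS) Z
end G

section G
variable (P : ModuleCat.{u} Γ) {S : ShortComplex (ModuleCat.{u} Λ)} (hS : S.ShortExact)
  (Z : ModuleCat.{u} (Λ ⊗[K] Γ))

lemma F_exact2 (hS : S.ShortExact)
    (Z : ModuleCat.{u} (Λ ⊗[K] Γ)) (n : ℕ) :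
    Function.Exact (pre K (mF K P (Ext.mk₀ S.g)) Z (zero_add n))
      (pre K (mF K P (Ext.mk₀ S.f)) Z (zero_add n)) := by
  rw [mF_mk₀, mF_mk₀]
  exact pre_exact2 K (TF_exact K P S hS) Z n

lemma F_exact1 {n₀ n₁ : ℕ} (h : 1 + n₀ = n₁) :
    Function.Exact (pre K (mF K P (Ext.mk₀ S.f)) Z (zero_add n₀))
      (pre K (mF K P hS.extClass) Z h) := by
  rw [mF_mk₀, mF_extClass]
  exact pre_exact1 K (TF_exact K P S hS) Z h

lemma F_exact3 {n₀ n₁ : ℕ} (h : 1 + n₀ = n₁) :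
    Function.Exact (pre K (mF K P hS.extClass) Z h)
      (pre K (mF K P (Ext.mk₀ S.g)) Z (zero_add n₁)) := by
  rw [mF_mk₀, mF_extClass]
  exact pre_exact3 K (TF_exact K P S hS) Z h

lemma F_inj (hS : S.ShortExact)
    (Z : ModuleCat.{u} (Λ ⊗[K] Γ)) : Function.Injective (pre K (mF K P (Ext.mk₀ S.g)) Z (zero_add 0)) := by
  rw [mF_mk₀]
  exact pre_inj K (TF_exact K P S hS) Z
end G

variable {P Y : ModuleCat.{u} Λ} {Y' : ModuleCat.{u} Γ} {ι : Type} [Fintype ι]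

lemma pre_surj {A : Type u} [Ring A] [Algebra K A]
    {S : ShortComplex (ModuleCat.{u} A)} (hS : S.ShortExact) (Z : ModuleCat.{u} A)
    (hP : Projective S.X₂) {n₀ n₁ : ℕ} (h : 1 + n₀ = n₁) :
    Function.Surjective (pre K hS.extClass Z h) := by
  intro x
  obtain rfl : n₁ = n₀ + 1 := by omega
  exact (pre_exact3 K hS Z h x).1 (Ext.eq_zero_of_projective _)

lemma step2_zero_inj [IsNoetherianRing Γ] (b : Module.Basis ι Λ P) (X' : ModuleCat.{u} Γ)
    [Module.Finite Γ X'] :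
    Function.Injective (crossL K P Y X' Y' (zero_add 0)) := by
  obtain ⟨S, hS, rfl, hfin, n, ⟨c⟩⟩ := exists_pres X'
  have hc := crossL_pre_right (K := K) (X := P) (Y := Y) (Y' := Y') (Ext.mk₀ S.g)
    (fun a => mk₀_mG_comm_mk₀ a S.g) (zero_add 0)
  have h1 : Function.Injective (crossL K P Y S.X₂ Y' (zero_add 0) ∘ₗ
      (pre K (Ext.mk₀ S.g) Y' (zero_add 0)).lTensor (Ext.{u} P Y 0)) :=
    (step1 b c).1.comp (Module.Flat.lTensor_preserves_injective_linearMap _ (pre_inj K hS Y'))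
  rw [hc, LinearMap.coe_comp] at h1
  exact Function.Injective.of_comp h1

lemma step2 [IsNoetherianRing Γ] (b : Module.Basis ι Λ P) (p : ℕ) :
    ∀ (X' : ModuleCat.{u} Γ) [Module.Finite Γ X'],
    Function.Bijective (crossL K P Y X' Y' (zero_add p)) := by
  induction p with
  | zero =>
    intro X' _
    obtain ⟨S, hS, rfl, hfin, n, ⟨c⟩⟩ := exists_pres X'
    refine ⟨step2_zero_inj b _, ?_⟩
    exact LinearMap.surjective_of_surjective_of_injective_of_left_exact _ _ _ _ _ _ _
      (crossL_pre_right (K := K) (X := P) (Y := Y) (Y' := Y') (Ext.mk₀ S.g)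
        (fun a => mk₀_mG_comm_mk₀ a S.g) (zero_add 0)).symm
      (crossL_pre_right (K := K) (X := P) (Y := Y) (Y' := Y') (Ext.mk₀ S.f)
        (fun a => mk₀_mG_comm_mk₀ a S.f) (zero_add 0)).symm
      (Module.Flat.lTensor_exact _ (pre_exact2 K hS Y' 0)) (G_exact2 P hS _ 0)
      (step1 b c).2 (step2_zero_inj b _) (G_inj P hS _)
  | succ p ih =>
    intro X' _
    obtain ⟨S, hS, rfl, hfin, n, ⟨c⟩⟩ := exists_pres X'
    have hQ : Module.Finite Γ S.X₂ := Module.Finite.of_basis c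
    have h1 : 1 + p = p + 1 := by omega
    refine LinearMap.bijective_of_surjective_of_bijective_of_right_exact _ _ _ _ _ _ _
      (crossL_pre_right (K := K) (X := P) (Y := Y) (Y' := Y') (Ext.mk₀ S.f)
        (fun a => mk₀_mG_comm_mk₀ a S.f) (zero_add p)).symm
      (crossL_pre_right (K := K) (X := P) (Y := Y) (Y' := Y') hS.extClass
        (fun a => mk₀_mG_comm_ext a hS) h1).symm
      (Module.Flat.lTensor_exact _ (pre_exact1 K hS Y' h1)) (G_exact1 P hS _ h1)
      (ih _).2 (ih _) ?_ ?_
    · exact LinearMap.lTensor_surjective _ (pre_surj hS Y' (proj_of_basis c) h1)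
    · rw [mG_extClass]
      exact pre_surj (TG_exact K P S hS) _ (tob_projective b c) h1

end F

section G
variable {K Λ Γ : Type u} [Field K] [Ring Λ] [Ring Γ] [Algebra K Λ] [Algebra K Γ]

section
variable (K) (X Y : ModuleCat.{u} Λ) (X' Y' : ModuleCat.{u} Γ)

/-- The Künneth sum in degree `p`. -/
abbrev SS (p : ℕ) : Type u :=
  (j : Fin (p + 1)) → Ext.{u} X Y (p - (j : ℕ)) ⊗[K] Ext.{u} X' Y' (j : ℕ)

lemma SS_idx {p : ℕ} (j : Fin (p + 1)) : p - (j : ℕ) + (j : ℕ) = p := by omega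

/-- The Künneth map. -/
noncomputable def Phi (p : ℕ) : SS K X Y X' Y' p →ₗ[K] Ext.{u} (tob K X X') (tob K Y Y') p :=
  ∑ j : Fin (p + 1), crossL K X Y X' Y' (SS_idx j) ∘ₗ LinearMap.proj j

lemma Phi_apply (p : ℕ) (x : SS K X Y X' Y' p) :
    Phi K X Y X' Y' p x = ∑ j : Fin (p + 1), crossL K X Y X' Y' (SS_idx j) (x j) := by
  simp only [Phi, LinearMap.sum_apply, LinearMap.comp_apply, LinearMap.proj_apply]
end

variable {X Z : ModuleCat.{u} Λ}

section
variable (K) (Y : ModuleCat.{u} Λ) (X' Y' : ModuleCat.{u} Γ)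

/-- Functoriality of the Künneth sum. -/
noncomputable def mapSS (γ : Ext.{u} X Z 0) (p : ℕ) : SS K Z Y X' Y' p →ₗ[K] SS K X Y X' Y' p :=
  LinearMap.pi fun j => (pre K γ Y (zero_add _)).rTensor _ ∘ₗ LinearMap.proj j

/-- The connecting map of the Künneth sum. -/
noncomputable def delta (γ : Ext.{u} X Z 1) (p : ℕ) :
    SS K Z Y X' Y' p →ₗ[K] SS K X Y X' Y' (p + 1) :=
  LinearMap.pi fun j => if h : (j : ℕ) < p + 1 then
    (pre K γ Y (show 1 + (p - (j : ℕ)) = p + 1 - (j : ℕ) by omega)).rTensor _ ∘ₗ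
      LinearMap.proj (R := K) (φ := fun j : Fin (p + 1) =>
        Ext.{u} Z Y (p - (j : ℕ)) ⊗[K] Ext.{u} X' Y' (j : ℕ)) ⟨j, h⟩ else 0
end

variable {Y : ModuleCat.{u} Λ} {X' Y' : ModuleCat.{u} Γ}

lemma mapSS_apply (γ : Ext.{u} X Z 0) (p : ℕ) (x : SS K Z Y X' Y' p) (j : Fin (p + 1)) :
    mapSS K Y X' Y' γ p x j = (pre K γ Y (zero_add _)).rTensor _ (x j) := rfl

lemma delta_apply (γ : Ext.{u} X Z 1) (p : ℕ) (x : SS K Z Y X' Y' p) (j : Fin (p + 2))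
    (h : (j : ℕ) < p + 1) :
    delta K Y X' Y' γ p x j =
      (pre K γ Y (show 1 + (p - (j : ℕ)) = p + 1 - (j : ℕ) by omega)).rTensor _ (x ⟨j, h⟩) := by
  simp only [delta, LinearMap.pi_apply, dif_pos h]
  rfl

lemma delta_apply' (γ : Ext.{u} X Z 1) (p : ℕ) (x : SS K Z Y X' Y' p) (j : Fin (p + 2))
    (h : ¬ (j : ℕ) < p + 1) : delta K Y X' Y' γ p x j = 0 := by
  simp only [delta, LinearMap.pi_apply, dif_neg h]
  rfl

lemma Phi_mapSS (γ : Ext.{u} X Z 0) (p : ℕ) :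
    pre K (mF K X' γ) (tob K Y Y') (zero_add p) ∘ₗ Phi K Z Y X' Y' p =
      Phi K X Y X' Y' p ∘ₗ mapSS K Y X' Y' γ p := by
  refine LinearMap.ext fun x => ?_
  simp only [LinearMap.comp_apply, Phi_apply, map_sum, mapSS_apply]
  refine Finset.sum_congr rfl fun j _ => ?_
  exact (LinearMap.congr_fun (crossL_pre_left γ (zero_add _) (SS_idx j) (SS_idx j) (zero_add p))
    (x j)).symm

lemma Phi_delta (γ : Ext.{u} X Z 1) (p : ℕ) (hp : 1 + p = p + 1) :
    pre K (mF K X' γ) (tob K Y Y') hp ∘ₗ Phi K Z Y X' Y' p =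
      Phi K X Y X' Y' (p + 1) ∘ₗ delta K Y X' Y' γ p := by
  refine LinearMap.ext fun x => ?_
  simp only [LinearMap.comp_apply, Phi_apply, map_sum]
  conv_rhs => rw [Fin.sum_univ_castSucc]
  rw [delta_apply' _ _ _ (Fin.last (p + 1)) (by simp), map_zero, add_zero]
  refine Finset.sum_congr rfl fun j _ => ?_
  rw [delta_apply _ _ _ j.castSucc j.2]
  exact (LinearMap.congr_fun (crossL_pre_left γ (by simp; omega) (SS_idx j) (SS_idx j.castSucc) hp)
    (x j)).symm

section rows
variable {S : ShortComplex (ModuleCat.{u} Λ)} (hS : S.ShortExact)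

lemma exact_comp_zero {V₁ V₂ V₃ : Type*} [AddCommGroup V₁] [AddCommGroup V₂] [AddCommGroup V₃]
  [Module K V₁] [Module K V₂] [Module K V₃] {f : V₁ →ₗ[K] V₂} {g : V₂ →ₗ[K] V₃}
  (h : Function.Exact f g) (x : V₁) : g (f x) = 0 := h.apply_apply_eq_zero x

lemma SS_exact2 (hS : S.ShortExact) (p : ℕ) : Function.Exact (mapSS K Y X' Y' (Ext.mk₀ S.g) p)
    (mapSS K Y X' Y' (Ext.mk₀ S.f) p) := by
  have H (n : ℕ) (V : Type u) [AddCommGroup V] [Module K V] :=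
    Module.Flat.rTensor_exact V (pre_exact2 K hS Y n)
  intro x
  constructor
  · intro hx
    choose y hy using fun j => (H _ _ (x j)).1 (congrFun hx j)
    exact ⟨y, funext hy⟩
  · rintro ⟨y, rfl⟩
    funext j
    exact (H _ _).apply_apply_eq_zero (y j)

lemma SS_exact1 (p : ℕ) : Function.Exact (mapSS K Y X' Y' (Ext.mk₀ S.f) p)
    (delta K Y X' Y' hS.extClass p) := by
  have H {n m : ℕ} (h : 1 + n = m) (V : Type u) [AddCommGroup V] [Module K V] :=
    Module.Flat.rTensor_exact V (pre_exact1 K hS Y h)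
  intro x
  constructor
  · intro hx
    have (j : Fin (p + 1)) : ∃ y, (pre K (Ext.mk₀ S.f) Y (zero_add _)).rTensor _ y = x j := by
      refine (H (show 1 + (p - (j : ℕ)) = p + 1 - (j : ℕ) by omega) _ (x j)).1 ?_
      have := congrFun hx j.castSucc
      rw [delta_apply _ _ _ _ j.2] at this
      exact this
    choose y hy using this
    exact ⟨y, funext hy⟩
  · rintro ⟨y, rfl⟩
    funext j
    by_cases h : (j : ℕ) < p + 1
    · rw [delta_apply _ _ _ _ h]
      exact (H _ _).apply_apply_eq_zero (y ⟨j, h⟩)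
    · rw [delta_apply' _ _ _ _ h]
      rfl

lemma SS_exact3 (p : ℕ) : Function.Exact (delta K Y X' Y' hS.extClass p)
    (mapSS K Y X' Y' (Ext.mk₀ S.g) (p + 1)) := by
  have H {n m : ℕ} (h : 1 + n = m) (V : Type u) [AddCommGroup V] [Module K V] :=
    Module.Flat.rTensor_exact V (pre_exact3 K hS Y h)
  intro x
  constructor
  · intro hx
    have (j : Fin (p + 1)) : ∃ y, (pre K hS.extClass Y
        (show 1 + (p - (j : ℕ)) = p + 1 - (j : ℕ) by omega)).rTensor _ y = x j.castSucc := by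
      exact (H _ _ (x j.castSucc)).1 (congrFun hx j.castSucc)
    choose y hy using this
    refine ⟨y, ?_⟩
    funext j
    by_cases h : (j : ℕ) < p + 1
    · rw [delta_apply _ _ _ _ h]
      exact hy ⟨j, h⟩
    · rw [delta_apply' _ _ _ _ h]
      have hinj : ∀ n : ℕ, n = 0 → Function.Injective
          ((pre K (Ext.mk₀ S.g) Y (zero_add n)).rTensor (Ext.{u} X' Y' (j : ℕ))) := by
        rintro n rfl
        exact Module.Flat.rTensor_preserves_injective_linearMap _ (pre_inj K hS Y)
      refine (hinj _ (by omega) ?_).symm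
      exact (congrFun hx j).trans (map_zero _).symm
  · rintro ⟨y, rfl⟩
    funext j
    rw [mapSS_apply]
    by_cases h : (j : ℕ) < p + 1
    · rw [delta_apply _ _ _ _ h]
      exact (H _ _).apply_apply_eq_zero (y ⟨j, h⟩)
    · rw [delta_apply' _ _ _ _ h, map_zero]
      rfl

lemma SS_inj (hS : S.ShortExact) : Function.Injective (mapSS K Y X' Y' (Ext.mk₀ S.g) 0) := by
  intro x y h
  funext j
  have hinj : ∀ n : ℕ, n = 0 → Function.Injective
      ((pre K (Ext.mk₀ S.g) Y (zero_add n)).rTensor (Ext.{u} X' Y' (j : ℕ))) := by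
    rintro n rfl
    exact Module.Flat.rTensor_preserves_injective_linearMap _ (pre_inj K hS Y)
  exact hinj _ (by omega) (congrFun h j)

end rows

lemma Phi_free [IsNoetherianRing Γ] {P : ModuleCat.{u} Λ} {ι : Type} [Fintype ι]
    (b : Module.Basis ι Λ P) [Module.Finite Γ X'] (p : ℕ) :
    Function.Bijective (Phi K P Y X' Y' p) := by
  have hP := proj_of_basis b
  have h2 : ∀ {i j : ℕ} (h : i + j = p) (_ : i = 0), Function.Bijective (crossL K P Y X' Y' h) := by
    rintro i j h rfl
    obtain rfl : j = p := by omega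
    exact step2 b j X'
  have hsub : ∀ {i j : ℕ} (_ : i ≠ 0), Subsingleton (Ext.{u} P Y i ⊗[K] Ext.{u} X' Y' j) := by
    rintro i j h
    obtain ⟨k, rfl⟩ := Nat.exists_eq_succ_of_ne_zero h
    have : Subsingleton (Ext.{u} P Y (k + 1)) := Ext.subsingleton_of_projective _ _ _
    infer_instance
  have hPhi : ∀ x, Phi K P Y X' Y' p x =
      crossL K P Y X' Y' (SS_idx (Fin.last p)) (x (Fin.last p)) := by
    intro x
    rw [Phi_apply, Finset.sum_eq_single (Fin.last p)]
    · intro j _ hj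
      have := hsub (i := p - j) (j := j) (by
        have : (j : ℕ) ≠ p := fun h => hj (Fin.ext h)
        omega)
      rw [Subsingleton.elim (x j) 0, map_zero]
    · simp
  have hb := h2 (SS_idx (Fin.last p)) (by simp)
  constructor
  · intro x y h
    rw [hPhi, hPhi] at h
    funext j
    by_cases hj : j = Fin.last p
    · subst hj
      exact hb.1 h
    · have := hsub (i := p - j) (j := j) (by
        have : (j : ℕ) ≠ p := fun h => hj (Fin.ext h)
        omega)
      exact Subsingleton.elim _ _
  · intro y
    obtain ⟨t, rfl⟩ := hb.2 y
    refine ⟨Pi.single (Fin.last p) t, ?_⟩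
    rw [hPhi, Pi.single_eq_same]

lemma Phi_zero_inj [IsNoetherianRing Λ] [IsNoetherianRing Γ] [Module.Finite Γ X']
    (X : ModuleCat.{u} Λ) [Module.Finite Λ X] :
    Function.Injective (Phi K X Y X' Y' 0) := by
  obtain ⟨S, hS, rfl, hfin, n, ⟨c⟩⟩ := exists_pres X
  have h1 : Function.Injective (Phi K S.X₂ Y X' Y' 0 ∘ₗ mapSS K Y X' Y' (Ext.mk₀ S.g) 0) :=
    (Phi_free c 0).1.comp (SS_inj hS)
  rw [← Phi_mapSS, LinearMap.coe_comp] at h1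
  exact Function.Injective.of_comp h1

lemma Phi_succ_inj [IsNoetherianRing Λ] [IsNoetherianRing Γ] [Module.Finite Γ X']
    (p : ℕ) (ih : ∀ (X : ModuleCat.{u} Λ) [Module.Finite Λ X],
      Function.Bijective (Phi K X Y X' Y' p)) (X : ModuleCat.{u} Λ) [Module.Finite Λ X] :
    Function.Injective (Phi K X Y X' Y' (p + 1)) := by
  obtain ⟨S, hS, rfl, hfin, n, ⟨c⟩⟩ := exists_pres X
  have h1 : 1 + p = p + 1 := by omega
  exact LinearMap.injective_of_surjective_of_injective_of_injective _ _ _ _ _ _ _ _ _ _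
    (Phi_mapSS (Ext.mk₀ S.f) p) (Phi_delta hS.extClass p h1) (Phi_mapSS (Ext.mk₀ S.g) (p + 1))
    (SS_exact1 hS p) (SS_exact3 hS p) (F_exact1 X' hS _ h1)
    (Phi_free c p).2 (ih _).1 (Phi_free c (p + 1)).1

theorem Phi_bij [IsNoetherianRing Λ] [IsNoetherianRing Γ] [Module.Finite Γ X'] (p : ℕ) :
    ∀ (X : ModuleCat.{u} Λ) [Module.Finite Λ X], Function.Bijective (Phi K X Y X' Y' p) := by
  induction p with
  | zero =>
    intro X _
    obtain ⟨S, hS, rfl, hfin, n, ⟨c⟩⟩ := exists_pres X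
    refine ⟨Phi_zero_inj _, ?_⟩
    exact LinearMap.surjective_of_surjective_of_injective_of_left_exact _ _ _ _ _ _ _
      (Phi_mapSS (Ext.mk₀ S.g) 0) (Phi_mapSS (Ext.mk₀ S.f) 0)
      (SS_exact2 hS 0) (F_exact2 X' hS _ 0) (Phi_free c 0).2 (Phi_zero_inj _) (F_inj X' hS _)
  | succ p ih =>
    intro X _
    refine ⟨Phi_succ_inj p ih X, ?_⟩
    obtain ⟨S, hS, rfl, hfin, n, ⟨c⟩⟩ := exists_pres X
    have h1 : 1 + p = p + 1 := by omega
    exact LinearMap.surjective_of_surjective_of_surjective_of_injective _ _ _ _ _ _ _ _ _ _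
      (Phi_delta hS.extClass p h1) (Phi_mapSS (Ext.mk₀ S.g) (p + 1))
      (Phi_mapSS (Ext.mk₀ S.f) (p + 1))
      (SS_exact2 hS (p + 1)) (F_exact3 X' hS _ h1) (F_exact2 X' hS _ (p + 1))
      (ih _).2 (Phi_free c (p + 1)).2 (Phi_succ_inj p ih _)

end G

section H
variable {K Λ Γ : Type u} [Field K] [Ring Λ] [Ring Γ] [Algebra K Λ] [Algebra K Γ]

/-- The `K`-module structure is determined by the `A`-module structure. -/
lemma module_eq_compHom (A V : Type u) [Ring A] [Algebra K A] [AddCommGroup V]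
    (i : Module K V) [Module A V] [IsScalarTower K A V] :
    i = ModuleCat.moduleOfAlgebraModule (k := K) (ModuleCat.of A V) := by
  refine Module.ext' _ _ fun r x => ?_
  exact algebra_compatible_smul A r x

lemma kunneth_aux [FiniteDimensional K Λ] [FiniteDimensional K Γ]
    (X Y : ModuleCat.{u} Λ) (X' Y' : ModuleCat.{u} Γ) [Module.Finite Λ X] [Module.Finite Γ X']
    (p : ℕ) :
    Nonempty ((((_root_.Ext K (ModuleCat.{u} (Λ ⊗[K] Γ)) p).obj
      (Opposite.op (tob K X X'))).obj (tob K Y Y')) ≃ₗ[K]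
      (DirectSum (Fin (p + 1)) fun i =>
        (((_root_.Ext K (ModuleCat.{u} Λ) (i : ℕ)).obj (Opposite.op X)).obj Y) ⊗[K]
        (((_root_.Ext K (ModuleCat.{u} Γ) (p - (i : ℕ))).obj (Opposite.op X')).obj Y'))) := by
  have : IsNoetherianRing Λ := IsNoetherianRing.of_finite K Λ
  have : IsNoetherianRing Γ := IsNoetherianRing.of_finite K Γ
  obtain ⟨e₀⟩ := ext_bridge (K := K) (tob K X X') (tob K Y Y') p
  let e₁ := (LinearEquiv.ofBijective _ (Phi_bij (K := K) (Y := Y) (X' := X') (Y' := Y') p X)).symm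
  have h₂ : ∀ i j i' j' : ℕ, i = i' → j = j' → Nonempty
      ((Ext.{u} X Y i ⊗[K] Ext.{u} X' Y' j) ≃ₗ[K]
      (((_root_.Ext K (ModuleCat.{u} Λ) i').obj (Opposite.op X)).obj Y) ⊗[K]
        (((_root_.Ext K (ModuleCat.{u} Γ) j').obj (Opposite.op X')).obj Y')) := by
    rintro i j _ _ rfl rfl
    obtain ⟨a⟩ := ext_bridge (K := K) X Y i
    obtain ⟨b⟩ := ext_bridge (K := K) X' Y' j
    exact ⟨(TensorProduct.congr a b).symm⟩
  let e₂ := LinearEquiv.piCongrLeft' K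
    (fun j : Fin (p + 1) => Ext.{u} X Y (p - (j : ℕ)) ⊗[K] Ext.{u} X' Y' (j : ℕ)) Fin.revPerm
  have h₃ : ∀ i : Fin (p + 1), Nonempty
      ((Ext.{u} X Y (p - ((Fin.revPerm.symm i : Fin (p + 1)) : ℕ)) ⊗[K]
        Ext.{u} X' Y' ((Fin.revPerm.symm i : Fin (p + 1)) : ℕ)) ≃ₗ[K]
      (((_root_.Ext K (ModuleCat.{u} Λ) (i : ℕ)).obj (Opposite.op X)).obj Y) ⊗[K]
        (((_root_.Ext K (ModuleCat.{u} Γ) (p - (i : ℕ))).obj (Opposite.op X')).obj Y')) := by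
    intro i
    apply h₂
    · simp [Fin.val_rev]; omega
    · simp [Fin.val_rev]
  exact ⟨e₀ ≪≫ₗ e₁ ≪≫ₗ e₂ ≪≫ₗ (LinearEquiv.piCongrRight fun i => (h₃ i).some) ≪≫ₗ
    (DirectSum.linearEquivFunOnFintype K (Fin (p + 1)) _).symm⟩

end H

end KunnethExt

open TensorProduct DirectSum in
/-- **Künneth formula for Ext.** For finite dimensional algebras `Λ`, `Γ` over
a field `K` and finitely generated modules `M, N` over `Λ`, `M', N'` over `Γ`, for every
`p ≥ 0` there is a `K`-linear isomorphism
`Ext^p_{Λ⊗Γ}(M⊗M', N⊗N') ≅ ⨁_{i+j=p} Ext^i_Λ(M,N) ⊗ Ext^j_Γ(M',N')`. -/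
theorem ext_tensorProduct_kunneth
    (K Λ Γ M N M' N' : Type u) [Field K] [Ring Λ] [Ring Γ]
    [Algebra K Λ] [Algebra K Γ] [FiniteDimensional K Λ] [FiniteDimensional K Γ]
    [AddCommGroup M] [Module K M] [Module Λ M] [IsScalarTower K Λ M] [Module.Finite Λ M]
    [AddCommGroup N] [Module K N] [Module Λ N] [IsScalarTower K Λ N] [Module.Finite Λ N]
    [AddCommGroup M'] [Module K M'] [Module Γ M'] [IsScalarTower K Γ M'] [Module.Finite Γ M']
    [AddCommGroup N'] [Module K N'] [Module Γ N'] [IsScalarTower K Γ N'] [Module.Finite Γ N']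
    (p : ℕ) :
    Nonempty ((extGrp K (Λ ⊗[K] Γ) p (M ⊗[K] M') (N ⊗[K] N')) ≃ₗ[K]
      (⨁ i : Fin (p + 1),
        ((extGrp K Λ (i : ℕ) M N) ⊗[K] (extGrp K Γ (p - (i : ℕ)) M' N')))) := by
  obtain rfl := KunnethExt.module_eq_compHom (K := K) Λ M ‹_›
  obtain rfl := KunnethExt.module_eq_compHom (K := K) Λ N ‹_›
  obtain rfl := KunnethExt.module_eq_compHom (K := K) Γ M' ‹_›
  obtain rfl := KunnethExt.module_eq_compHom (K := K) Γ N' ‹_›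
  exact KunnethExt.kunneth_aux (K := K) (ModuleCat.of Λ M) (ModuleCat.of Λ N)
    (ModuleCat.of Γ M') (ModuleCat.of Γ N') p
end

section
/- Let Λ and Γ be finite dimensional algebras over a field K and n, m ≥ 1, let M be a finitely generated left Λ-module and N a finitely generated left Γ-module. (1) If the injective dimension of M over Λ equals n and the injective dimension of N over Γ equals m, then the injective dimension of M⊗N over Λ⊗Γ equals n+m. (2) If the projective dimension of M over Λ equals n and the projective dimension of N over Γ equals m, then the projective dimension of M⊗N over Λ⊗Γ equals n+m. -/
open TensorProduct

universe u

open CategoryTheory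

/-- The projective dimension of the `A`-module `X` equals `n`, expressed via vanishing and
non-vanishing of Ext groups: `Ext^q(X, -) = 0` for all `q > n` and `Ext^n(X, L) ≠ 0` for
some module `L`. -/
noncomputable def ProjDimEq (K : Type u) [Field K] (A : Type u) [Ring A] [Algebra K A]
    (X : Type u) [AddCommGroup X] [Module A X] (n : ℕ) : Prop :=
  (∀ (L : ModuleCat.{u} A) (q : ℕ), n < q →
      Subsingleton
        (((_root_.Ext K (ModuleCat.{u} A) q).obj (Opposite.op (ModuleCat.of A X))).obj L)) ∧
    ∃ L : ModuleCat.{u} A, ¬ Subsingleton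
      (((_root_.Ext K (ModuleCat.{u} A) n).obj (Opposite.op (ModuleCat.of A X))).obj L)

/-- The injective dimension of the `A`-module `X` equals `n`, expressed via vanishing and
non-vanishing of Ext groups: `Ext^q(-, X) = 0` for all `q > n` and `Ext^n(L, X) ≠ 0` for
some module `L`. -/
noncomputable def InjDimEq (K : Type u) [Field K] (A : Type u) [Ring A] [Algebra K A]
    (X : Type u) [AddCommGroup X] [Module A X] (n : ℕ) : Prop :=
  (∀ (L : ModuleCat.{u} A) (q : ℕ), n < q →
      Subsingleton
        (((_root_.Ext K (ModuleCat.{u} A) q).obj (Opposite.op L)).obj (ModuleCat.of A X))) ∧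
    ∃ L : ModuleCat.{u} A, ¬ Subsingleton
      (((_root_.Ext K (ModuleCat.{u} A) n).obj (Opposite.op L)).obj (ModuleCat.of A X))

section Cmp

lemma rootExt_subsingleton_iff (K : Type u) [Field K] (A : Type u) [Ring A] [Algebra K A]
    (X L : ModuleCat.{u} A) (n : ℕ) :
    Subsingleton (((_root_.Ext K (ModuleCat.{u} A) (n + 1)).obj (Opposite.op X)).obj L) ↔
      Subsingleton (Abelian.Ext.{u} X L (n + 1)) := by
  let P := projectiveResolution X
  have e := P.isoExt (R := K) (n + 1) L
  have h1 : Subsingleton (((_root_.Ext K (ModuleCat.{u} A) (n + 1)).obj (Opposite.op X)).obj L) ↔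
      ∀ f : P.complex.X (n + 1) ⟶ L, P.complex.d (n + 2) (n + 1) ≫ f = 0 →
        ∃ g : P.complex.X n ⟶ L, P.complex.d (n + 1) n ≫ g = f := by
    rw [← ModuleCat.isZero_iff_subsingleton, e.isZero_iff,
      ← HomologicalComplex.exactAt_iff_isZero_homology,
      HomologicalComplex.exactAt_iff' _ n (n + 1) (n + 2) (by simp) (by simp),
      ShortComplex.moduleCat_exact_iff]
    rfl
  have h2 : Subsingleton (Abelian.Ext.{u} X L (n + 1)) ↔
      ∀ f : P.complex.X (n + 1) ⟶ L, P.complex.d (n + 2) (n + 1) ≫ f = 0 →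
        ∃ g : P.complex.X n ⟶ L, P.complex.d (n + 1) n ≫ g = f := by
    constructor
    · intro h f hf
      exact (P.extMk_eq_zero_iff f (n + 2) rfl hf n rfl).1 (Subsingleton.elim _ _)
    · intro h
      have key : ∀ α : Abelian.Ext.{u} X L (n + 1), α = 0 := by
        intro α
        obtain ⟨f, hf, rfl⟩ := P.extMk_surjective α (n + 2) rfl
        exact (P.extMk_eq_zero_iff f (n + 2) rfl hf n rfl).2 (h f hf)
      exact ⟨fun a b => by rw [key a, key b]⟩
  rw [h1, h2]

lemma projDimEq_iff (K : Type u) [Field K] (A : Type u) [Ring A] [Algebra K A]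
    (X : Type u) [AddCommGroup X] [Module A X] (n : ℕ) :
    ProjDimEq K A X (n + 1) ↔ HasProjectiveDimensionLT (ModuleCat.of A X) (n + 2) ∧
      ¬ HasProjectiveDimensionLT (ModuleCat.of A X) (n + 1) := by
  unfold ProjDimEq
  constructor
  · rintro ⟨h, L, hL⟩
    refine ⟨hasProjectiveDimensionLT_of_enoughInjectives _ _ fun Y =>
      (rootExt_subsingleton_iff K A _ _ _).1 (h Y (n + 2) (by omega)), fun h' => hL ?_⟩
    rw [rootExt_subsingleton_iff]
    exact HasProjectiveDimensionLT.subsingleton _ (n + 1) _ le_rfl _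
  · rintro ⟨h, h'⟩
    constructor
    · intro L q hq
      obtain ⟨q, rfl⟩ : ∃ k, q = k + 1 := ⟨q - 1, by omega⟩
      rw [rootExt_subsingleton_iff]
      exact HasProjectiveDimensionLT.subsingleton _ (n + 2) _ (by omega) _
    · by_contra! hc
      exact h' (hasProjectiveDimensionLT_of_enoughInjectives _ _ fun Y =>
        (rootExt_subsingleton_iff K A _ _ _).1 (hc Y))

lemma injDimEq_iff (K : Type u) [Field K] (A : Type u) [Ring A] [Algebra K A]
    (X : Type u) [AddCommGroup X] [Module A X] (n : ℕ) :
    InjDimEq K A X (n + 1) ↔ HasInjectiveDimensionLT (ModuleCat.of A X) (n + 2) ∧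
      ¬ HasInjectiveDimensionLT (ModuleCat.of A X) (n + 1) := by
  unfold InjDimEq
  constructor
  · rintro ⟨h, L, hL⟩
    refine ⟨hasInjectiveDimensionLT_of_enoughProjectives _ _ fun Y =>
      (rootExt_subsingleton_iff K A _ _ _).1 (h Y (n + 2) (by omega)), fun h' => hL ?_⟩
    rw [rootExt_subsingleton_iff]
    exact HasInjectiveDimensionLT.subsingleton _ (n + 1) _ le_rfl _
  · rintro ⟨h, h'⟩
    constructor
    · intro L q hq
      obtain ⟨q, rfl⟩ : ∃ k, q = k + 1 := ⟨q - 1, by omega⟩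
      rw [rootExt_subsingleton_iff]
      exact HasInjectiveDimensionLT.subsingleton _ (n + 2) _ (by omega) _
    · by_contra! hc
      exact h' (hasInjectiveDimensionLT_of_enoughProjectives _ _ fun Y =>
        (rootExt_subsingleton_iff K A _ _ _).1 (hc Y))

end Cmp

section Split
open Abelian Limits
variable {C : Type*} [Category* C] [Abelian C]

lemma exists_split_of_pd {S T : ShortComplex C} (hS : S.ShortExact) (hT : T.ShortExact)
    (φ : S ⟶ T) {Z : C} (g : T.X₃ ⟶ Z) (w : φ.τ₃ ≫ g = 0)
    (hZ : (ShortComplex.mk φ.τ₃ g w).ShortExact)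
    (h : HasProjectiveDimensionLT Z 2) (hP : Projective T.X₂) :
    ∃ (r : T.X₁ ⟶ S.X₁) (s : S.X₂ ⟶ S.X₁), φ.τ₁ ≫ r + S.f ≫ s = 𝟙 _ := by
  let := HasExt.standard C
  obtain ⟨y, hy⟩ := Ext.contravariant_sequence_exact₁ hZ _ hS.extClass (n₁ := 2) rfl
    (Ext.eq_zero_of_hasProjectiveDimensionLT _ 2 le_rfl)
  dsimp at y hy
  obtain ⟨r', hr⟩ := Ext.contravariant_sequence_exact₃ hT _ y (Ext.eq_zero_of_projective _)
    (n₀ := 0) rfl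
  obtain ⟨r, rfl⟩ := Ext.homEquiv₀.symm.surjective r'
  subst hr
  simp only [Ext.homEquiv₀_symm_apply] at hy
  have h0 : hS.extClass.comp (Ext.mk₀ (𝟙 _ - φ.τ₁ ≫ r)) (add_zero 1) = 0 := by
    rw [sub_eq_add_neg, Ext.mk₀_add, Ext.comp_add, Ext.mk₀_neg, Ext.comp_neg, Ext.comp_mk₀_id,
      ← sub_eq_add_neg, sub_eq_zero]
    rw [← Ext.mk₀_comp_mk₀, ← Ext.comp_assoc_of_third_deg_zero, 
      ShortComplex.ShortExact.extClass_naturality hS hT φ, Ext.comp_assoc_of_third_deg_zero, hy]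
  obtain ⟨s', hs⟩ := Ext.contravariant_sequence_exact₁ hS _ _ rfl h0
  obtain ⟨s, rfl⟩ := Ext.homEquiv₀.symm.surjective s'
  refine ⟨r, s, ?_⟩
  simp only [Ext.homEquiv₀_symm_apply, Ext.mk₀_comp_mk₀] at hs
  have := Ext.homEquiv₀.symm.injective hs
  rw [this]; abel

lemma exists_split_of_id {S T : ShortComplex C} (hS : S.ShortExact) (hT : T.ShortExact)
    (φ : T ⟶ S) {Z : C} (g : Z ⟶ T.X₁) (w : g ≫ φ.τ₁ = 0)
    (hZ : (ShortComplex.mk g φ.τ₁ w).ShortExact)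
    (h : HasInjectiveDimensionLT Z 2) (hP : Injective T.X₂) :
    ∃ (r : S.X₃ ⟶ T.X₃) (s : S.X₃ ⟶ S.X₂), r ≫ φ.τ₃ + s ≫ S.g = 𝟙 _ := by
  let := HasExt.standard C
  obtain ⟨y, hy⟩ := Ext.covariant_sequence_exact₃ _ hZ hS.extClass (n₁ := 2) rfl
    (Ext.eq_zero_of_hasInjectiveDimensionLT _ 2 le_rfl)
  dsimp at y hy
  obtain ⟨r', hr⟩ := Ext.covariant_sequence_exact₁ _ hT y (Ext.eq_zero_of_injective _)
    (n₀ := 0) rfl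
  obtain ⟨r, rfl⟩ := Ext.homEquiv₀.symm.surjective r'
  subst hr
  simp only [Ext.homEquiv₀_symm_apply] at hy
  have h0 : (Ext.mk₀ (𝟙 _ - r ≫ φ.τ₃)).comp hS.extClass (zero_add 1) = 0 := by
    rw [sub_eq_add_neg, Ext.mk₀_add, Ext.add_comp, Ext.mk₀_neg, Ext.neg_comp, Ext.mk₀_id_comp,
      ← sub_eq_add_neg, sub_eq_zero]
    rw [← Ext.mk₀_comp_mk₀, Ext.comp_assoc_of_second_deg_zero,
      ← ShortComplex.ShortExact.extClass_naturality hT hS φ, ← Ext.comp_assoc_of_third_deg_zero, hy]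
  obtain ⟨s', hs⟩ := Ext.covariant_sequence_exact₃ _ hS _ rfl h0
  obtain ⟨s, rfl⟩ := Ext.homEquiv₀.symm.surjective s'
  refine ⟨r, s, ?_⟩
  simp only [Ext.homEquiv₀_symm_apply, Ext.mk₀_comp_mk₀] at hs
  have := Ext.homEquiv₀.symm.injective hs
  rw [this]; abel

end Split
section TMap

variable {K Λ Γ : Type u} [Field K] [Ring Λ] [Ring Γ] [Algebra K Λ] [Algebra K Γ]
variable {M M' M'' N N' N'' : Type u}
  [AddCommGroup M] [Module K M] [Module Λ M] [IsScalarTower K Λ M]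
  [AddCommGroup M'] [Module K M'] [Module Λ M'] [IsScalarTower K Λ M']
  [AddCommGroup M''] [Module K M''] [Module Λ M''] [IsScalarTower K Λ M'']
  [AddCommGroup N] [Module K N] [Module Γ N] [IsScalarTower K Γ N]
  [AddCommGroup N'] [Module K N'] [Module Γ N'] [IsScalarTower K Γ N']
  [AddCommGroup N''] [Module K N''] [Module Γ N''] [IsScalarTower K Γ N'']

/-- Upgrade a `K`-linear map out of `M ⊗ N` to a `Λ ⊗ Γ`-linear map. -/
noncomputable def linOf {X : Type u} [AddCommGroup X] [Module K X] [Module (Λ ⊗[K] Γ) X]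
    (φ : M ⊗[K] N →ₗ[K] X)
    (h : ∀ (a : Λ) (g : Γ) (x : M) (y : N),
      φ ((a • x) ⊗ₜ (g • y)) = (a ⊗ₜ[K] g) • φ (x ⊗ₜ y)) :
    M ⊗[K] N →ₗ[Λ ⊗[K] Γ] X where
  toFun := φ
  map_add' := φ.map_add
  map_smul' := by
    intro c v
    simp only [RingHom.id_apply]
    induction c using TensorProduct.induction_on with
    | zero => simp
    | add c d hc hd => rw [add_smul, map_add, hc, hd, add_smul]
    | tmul a g =>
      induction v using TensorProduct.induction_on with
      | zero => simp
      | add v w hv hw => rw [smul_add, map_add, hv, hw, map_add, smul_add]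
      | tmul x y => rw [tensorTensor_smul_tmul, h]

/-- Tensor product of a `Λ`-linear and a `Γ`-linear map. -/
noncomputable def tmap (f : M →ₗ[Λ] M') (g : N →ₗ[Γ] N') :
    M ⊗[K] N →ₗ[Λ ⊗[K] Γ] M' ⊗[K] N' :=
  linOf (TensorProduct.map (f.restrictScalars K) (g.restrictScalars K)) (by
    intro a b x y
    simp [tensorTensor_smul_tmul])

@[simp] lemma tmap_tmul (f : M →ₗ[Λ] M') (g : N →ₗ[Γ] N') (x : M) (y : N) :
    tmap f g (x ⊗ₜ[K] y) = f x ⊗ₜ g y := rfl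

lemma tmap_apply (f : M →ₗ[Λ] M') (g : N →ₗ[Γ] N') (x : M ⊗[K] N) :
    tmap f g x = TensorProduct.map (f.restrictScalars K) (g.restrictScalars K) x := rfl

lemma tens_ext {X : Type u} [AddCommGroup X] [Module (Λ ⊗[K] Γ) X]
    {f g : M ⊗[K] N →ₗ[Λ ⊗[K] Γ] X} (h : ∀ x y, f (x ⊗ₜ y) = g (x ⊗ₜ y)) : f = g := by
  ext v
  induction v using TensorProduct.induction_on with
  | zero => simp
  | add v w hv hw => rw [map_add, hv, hw, map_add]
  | tmul x y => exact h x y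

lemma tmap_id : tmap (LinearMap.id : M →ₗ[Λ] M) (LinearMap.id : N →ₗ[Γ] N) =
    (LinearMap.id : M ⊗[K] N →ₗ[Λ ⊗[K] Γ] M ⊗[K] N) := tens_ext (by simp)

lemma tmap_comp (f : M →ₗ[Λ] M') (g : N →ₗ[Γ] N') (f' : M' →ₗ[Λ] M'') (g' : N' →ₗ[Γ] N'') :
    (tmap f' g').comp (tmap (K := K) f g) = tmap (f'.comp f) (g'.comp g) := tens_ext (by simp)

/-- Short exact sequences, unbundled. -/
structure SES {A X Y Z : Type u} [Ring A] [AddCommGroup X] [Module A X] [AddCommGroup Y]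
    [Module A Y] [AddCommGroup Z] [Module A Z] (f : X →ₗ[A] Y) (g : Y →ₗ[A] Z) : Prop where
  inj : Function.Injective f
  exact : Function.Exact f g
  surj : Function.Surjective g

lemma SES.tl {f : M →ₗ[Λ] M'} {g : M' →ₗ[Λ] M''} (h : SES f g) :
    SES (tmap (K := K) f (LinearMap.id : N →ₗ[Γ] N)) (tmap (K := K) g LinearMap.id) where
  inj := Module.Flat.rTensor_preserves_injective_linearMap (M := N) (f.restrictScalars K) h.inj
  exact := rTensor_exact N (f := f.restrictScalars K) (g := g.restrictScalars K) h.exact h.surj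
  surj := LinearMap.rTensor_surjective N (g := g.restrictScalars K) h.surj

lemma SES.tr {f : N →ₗ[Γ] N'} {g : N' →ₗ[Γ] N''} (h : SES f g) :
    SES (tmap (K := K) (LinearMap.id : M →ₗ[Λ] M) f) (tmap (K := K) LinearMap.id g) where
  inj := Module.Flat.lTensor_preserves_injective_linearMap (M := M) (f.restrictScalars K) h.inj
  exact := lTensor_exact M (f := f.restrictScalars K) (g := g.restrictScalars K) h.exact h.surj
  surj := LinearMap.lTensor_surjective M (g := g.restrictScalars K) h.surj

lemma SES.comp_eq_zero {A X Y Z : Type u} [Ring A] [AddCommGroup X] [Module A X] [AddCommGroup Y]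
    [Module A Y] [AddCommGroup Z] [Module A Z] {f : X →ₗ[A] Y} {g : Y →ₗ[A] Z} (h : SES f g) :
    g.comp f = 0 := h.exact.linearMap_comp_eq_zero

lemma SES.shortExact {A X Y Z : Type u} [Ring A] [AddCommGroup X] [Module A X] [AddCommGroup Y]
    [Module A Y] [AddCommGroup Z] [Module A Z] {f : X →ₗ[A] Y} {g : Y →ₗ[A] Z} (h : SES f g) :
    (ModuleCat.shortComplexOfCompEqZero f g h.comp_eq_zero).ShortExact :=
  ModuleCat.shortComplex_shortExact _ h.exact h.inj h.surj

end TMap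

section Contract

variable {K Λ Γ : Type u} [Field K] [Ring Λ] [Ring Γ] [Algebra K Λ] [Algebra K Γ]
variable {V V' V'' Q T Q' : Type u}
  [AddCommGroup V] [Module K V] [Module Λ V] [IsScalarTower K Λ V]
  [AddCommGroup V'] [Module K V'] [Module Λ V'] [IsScalarTower K Λ V']
  [AddCommGroup V''] [Module K V''] [Module Λ V''] [IsScalarTower K Λ V'']
  [AddCommGroup Q] [Module K Q] [Module Γ Q] [IsScalarTower K Γ Q]
  [AddCommGroup Q'] [Module K Q'] [Module Γ Q'] [IsScalarTower K Γ Q']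
  [AddCommGroup T] [Module K T] [Module Γ T] [IsScalarTower K Γ T]

/-- Contraction of the left factor with a functional. -/
noncomputable def ctr (T : Type u) [AddCommGroup T] [Module K T]
    (l : Module.Dual K V) : V ⊗[K] T →ₗ[K] T :=
  (TensorProduct.lid K T).toLinearMap.comp (LinearMap.rTensor T l)

@[simp] lemma ctr_tmul (l : Module.Dual K V) (v : V) (t : T) :
    ctr T l (v ⊗ₜ t) = l v • t := by simp [ctr]

lemma ctr_smul (l : Module.Dual K V) (a : Λ) (g : Γ) (x : V ⊗[K] T) :
    ctr T l ((a ⊗ₜ[K] g) • x) = g • ctr T (l.comp (Algebra.lsmul K K V a)) x := by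
  induction x using TensorProduct.induction_on with
  | zero => simp
  | add v w hv hw => rw [smul_add, map_add, hv, hw, map_add, smul_add]
  | tmul v t =>
    rw [tensorTensor_smul_tmul, ctr_tmul, ctr_tmul, smul_comm]
    simp

/-- The slice `q ↦ (l ⊗ 1) (φ (v ⊗ q))`. -/
noncomputable def slice (l : Module.Dual K V') (v : V)
    (φ : V ⊗[K] Q →ₗ[Λ ⊗[K] Γ] V' ⊗[K] T) : Q →ₗ[Γ] T where
  toFun q := ctr T l (φ (v ⊗ₜ q))
  map_add' q q' := by rw [TensorProduct.tmul_add, map_add, map_add]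
  map_smul' g q := by
    have : v ⊗ₜ[K] (g • q) = ((1 : Λ) ⊗ₜ[K] g) • (v ⊗ₜ[K] q) := by
      rw [tensorTensor_smul_tmul, one_smul]
    rw [this, map_smul, ctr_smul, RingHom.id_apply]
    congr 2
    ext; simp

lemma slice_apply (l : Module.Dual K V') (v : V)
    (φ : V ⊗[K] Q →ₗ[Λ ⊗[K] Γ] V' ⊗[K] T) (q : Q) :
    slice l v φ q = ctr T l (φ (v ⊗ₜ q)) := rfl

lemma exists_contract [FiniteDimensional K V'] (ω : (Q →ₗ[Γ] T) →ₗ[K] K)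
    (φ : V ⊗[K] Q →ₗ[Λ ⊗[K] Γ] V' ⊗[K] T) :
    ∃ c : V →ₗ[Λ] V', ∀ (l : Module.Dual K V') (v : V), l (c v) = ω (slice l v φ) := by
  have ex : ∀ v : V, ∃ w : V', ∀ l : Module.Dual K V', l w = ω (slice l v φ) := by
    intro v
    let F : Module.Dual K (Module.Dual K V') :=
      { toFun := fun l => ω (slice l v φ)
        map_add' := by
          intro l l'
          rw [← map_add]
          congr 1
          ext q
          simp [slice_apply, ctr, LinearMap.rTensor_add]
        map_smul' := by
          intro k l
          rw [RingHom.id_apply, ← map_smul]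
          congr 1
          ext q
          simp [slice_apply, ctr, LinearMap.rTensor_smul] }
    refine ⟨(Module.evalEquiv K V').symm F, fun l => ?_⟩
    rw [Module.apply_evalEquiv_symm_apply]
    rfl
  choose c hc using ex
  have sep : ∀ w w' : V', (∀ l : Module.Dual K V', l w = l w') → w = w' := by
    intro w w' h
    rw [← sub_eq_zero, ← Module.forall_dual_apply_eq_zero_iff K]
    intro l
    rw [map_sub, h, sub_self]
  refine ⟨{ toFun := c, map_add' := ?_, map_smul' := ?_ }, fun l v => hc v l⟩
  · intro v v'
    apply sep
    intro l
    rw [map_add, hc, hc, hc, ← map_add]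
    congr 1
    ext q
    simp [slice_apply, TensorProduct.add_tmul]
  · intro a v
    apply sep
    intro l
    rw [hc, RingHom.id_apply]
    have := hc v (l.comp (Algebra.lsmul K K V' a))
    simp only [LinearMap.comp_apply, Algebra.lsmul_coe] at this
    rw [this]
    congr 1
    ext q
    have e : (a • v) ⊗ₜ[K] q = (a ⊗ₜ[K] (1 : Γ)) • (v ⊗ₜ[K] q) := by
      rw [tensorTensor_smul_tmul, one_smul]
    rw [slice_apply, slice_apply, e, map_smul, ctr_smul, one_smul]

lemma ctr_tmap_right (l : Module.Dual K V) (h : Q →ₗ[Γ] T) (x : V ⊗[K] Q) :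
    ctr T l (tmap (LinearMap.id : V →ₗ[Λ] V) h x) = h (ctr Q l x) := by
  induction x using TensorProduct.induction_on with
  | zero => simp
  | add v w hv hw => simp only [map_add, hv, hw]
  | tmul v t => simpa using ((h.restrictScalars K).map_smul (l v) t).symm

lemma ctr_tmap_left (l : Module.Dual K V') (d : V →ₗ[Λ] V') (x : V ⊗[K] T) :
    ctr T l (tmap d (LinearMap.id : T →ₗ[Γ] T) x) = ctr T (l.comp (d.restrictScalars K)) x := by
  induction x using TensorProduct.induction_on with
  | zero => simp
  | add v w hv hw => simp only [map_add, hv, hw]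
  | tmul v t => simp

/-- `id` is outside a subspace of `End Q`: get a functional. -/
lemma exists_functional (W : Submodule K (Q →ₗ[Γ] Q)) (h : LinearMap.id ∉ W) :
    ∃ ω : (Q →ₗ[Γ] Q) →ₗ[K] K, ω LinearMap.id = 1 ∧ ∀ w ∈ W, ω w = 0 := by
  obtain ⟨f, hf, hW⟩ := Submodule.exists_le_ker_of_notMem h
  refine ⟨(f LinearMap.id)⁻¹ • f, by simp [hf], fun w hw => ?_⟩
  have : f w = 0 := hW hw
  simp [this]

lemma retract_of_proj [FiniteDimensional K V] (d : V →ₗ[Λ] V') (d' : Q →ₗ[Γ] Q')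
    (r : V' ⊗[K] Q →ₗ[Λ ⊗[K] Γ] V ⊗[K] Q) (s : V ⊗[K] Q' →ₗ[Λ ⊗[K] Γ] V ⊗[K] Q)
    (h : ∀ x, r (tmap d (LinearMap.id : Q →ₗ[Γ] Q) x) +
      s (tmap (LinearMap.id : V →ₗ[Λ] V) d' x) = x)
    (hd' : ¬ ∃ ρ : Q' →ₗ[Γ] Q, ρ.comp d' = LinearMap.id) :
    ∃ ρ : V' →ₗ[Λ] V, ρ.comp d = LinearMap.id := by
  let W : Submodule K (Q →ₗ[Γ] Q) :=
    { carrier := {w | ∃ ρ : Q' →ₗ[Γ] Q, ρ.comp d' = w}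
      add_mem' := by
        rintro _ _ ⟨a, rfl⟩ ⟨b, rfl⟩
        exact ⟨a + b, rfl⟩
      zero_mem' := ⟨0, rfl⟩
      smul_mem' := by
        rintro k _ ⟨a, rfl⟩
        exact ⟨k • a, rfl⟩ }
  obtain ⟨ω, h1, hW⟩ := exists_functional W hd'
  obtain ⟨c, hc⟩ := exists_contract ω r
  refine ⟨c, ?_⟩
  ext v
  rw [← sub_eq_zero, ← Module.forall_dual_apply_eq_zero_iff K]
  intro l
  rw [map_sub, sub_eq_zero, LinearMap.comp_apply, hc]
  have e : slice l (d v) r = l v • LinearMap.id - (slice l v s).comp d' := by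
    ext q
    have := congrArg (ctr Q l) (h (v ⊗ₜ q))
    simp only [tmap_tmul, LinearMap.id_apply, map_add, ctr_tmul] at this
    simp only [slice_apply, LinearMap.sub_apply, LinearMap.smul_apply, LinearMap.id_apply,
      LinearMap.comp_apply]
    rw [← this]; abel
  rw [e, map_sub, map_smul, h1, hW _ ⟨_, rfl⟩]
  simp

lemma section_of_inj [FiniteDimensional K V] [FiniteDimensional K V']
    (d : V' →ₗ[Λ] V) (d' : Q' →ₗ[Γ] Q)
    (r : V ⊗[K] Q →ₗ[Λ ⊗[K] Γ] V' ⊗[K] Q) (s : V ⊗[K] Q →ₗ[Λ ⊗[K] Γ] V ⊗[K] Q')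
    (h : ∀ x, tmap d (LinearMap.id : Q →ₗ[Γ] Q) (r x) +
      tmap (LinearMap.id : V →ₗ[Λ] V) d' (s x) = x)
    (hd' : ¬ ∃ ρ : Q →ₗ[Γ] Q', d'.comp ρ = LinearMap.id) :
    ∃ ρ : V →ₗ[Λ] V', d.comp ρ = LinearMap.id := by
  let W : Submodule K (Q →ₗ[Γ] Q) :=
    { carrier := {w | ∃ ρ : Q →ₗ[Γ] Q', d'.comp ρ = w}
      add_mem' := by
        rintro _ _ ⟨a, rfl⟩ ⟨b, rfl⟩
        exact ⟨a + b, by ext; simp⟩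
      zero_mem' := ⟨0, by simp⟩
      smul_mem' := by
        rintro k _ ⟨a, rfl⟩
        exact ⟨k • a, by
          ext q
          exact (d'.restrictScalars K).map_smul k (a q)⟩ }
  obtain ⟨ω, h1, hW⟩ := exists_functional W hd'
  obtain ⟨c, hc⟩ := exists_contract ω r
  refine ⟨c, ?_⟩
  ext v
  rw [← sub_eq_zero, ← Module.forall_dual_apply_eq_zero_iff K]
  intro l
  rw [map_sub, sub_eq_zero]
  have hc' := hc (l.comp (d.restrictScalars K)) v
  simp only [LinearMap.comp_apply, LinearMap.coe_restrictScalars] at hc'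
  rw [LinearMap.comp_apply, hc']
  have e : slice (l.comp (d.restrictScalars K)) v r =
      l v • LinearMap.id - d'.comp (slice l v s) := by
    ext q
    have := congrArg (ctr Q l) (h (v ⊗ₜ q))
    rw [map_add, ctr_tmap_left, ctr_tmap_right, ctr_tmul] at this
    simp only [slice_apply, LinearMap.sub_apply, LinearMap.smul_apply, LinearMap.id_apply,
      LinearMap.comp_apply]
    rw [← this]; abel
  rw [e, map_sub, map_smul, h1, hW _ ⟨_, rfl⟩]
  simp

end Contract
section ProjInj

variable {K Λ Γ : Type u} [Field K] [Ring Λ] [Ring Γ] [Algebra K Λ] [Algebra K Γ]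
variable {M N : Type u}
  [AddCommGroup M] [Module K M] [Module Λ M] [IsScalarTower K Λ M]
  [AddCommGroup N] [Module K N] [Module Γ N] [IsScalarTower K Γ N]

lemma free_tensor_proj (k l : ℕ) :
    Module.Projective (Λ ⊗[K] Γ) ((Fin k → Λ) ⊗[K] (Fin l → Γ)) := by
  let F : (Fin k × Fin l → Λ ⊗[K] Γ) →ₗ[Λ ⊗[K] Γ] ((Fin k → Λ) ⊗[K] (Fin l → Γ)) :=
    { toFun := fun x => ∑ p, x p • ((Pi.single p.1 (1 : Λ)) ⊗ₜ[K] (Pi.single p.2 (1 : Γ)))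
      map_add' := by intro x y; simp [add_smul, Finset.sum_add_distrib]
      map_smul' := by intro c x; simp [mul_smul, Finset.smul_sum] }
  let s₀ : (Fin k → Λ) ⊗[K] (Fin l → Γ) →ₗ[K] (Fin k × Fin l → Λ ⊗[K] Γ) :=
    LinearMap.pi fun p => TensorProduct.map (LinearMap.proj p.1) (LinearMap.proj p.2)
  let s : (Fin k → Λ) ⊗[K] (Fin l → Γ) →ₗ[Λ ⊗[K] Γ] (Fin k × Fin l → Λ ⊗[K] Γ) :=
    linOf s₀ (by
      intro a g x y
      ext p
      simp [s₀])
  refine Module.Projective.of_split s F (tens_ext fun x y => ?_)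
  have : F (s (x ⊗ₜ y)) = ∑ p : Fin k × Fin l, (x p.1 ⊗ₜ[K] y p.2) •
      ((Pi.single p.1 (1 : Λ)) ⊗ₜ[K] (Pi.single p.2 (1 : Γ))) := rfl
  rw [LinearMap.comp_apply, this, LinearMap.id_apply]
  simp only [tensorTensor_smul_tmul]
  rw [Fintype.sum_prod_type]
  simp only [← TensorProduct.tmul_sum, ← TensorProduct.sum_tmul]
  congr 1
  · ext i; simp [Finset.sum_apply, Pi.single_apply]
  · ext i; simp [Finset.sum_apply, Pi.single_apply]

lemma tensor_proj [Module.Finite Λ M] [Module.Finite Γ N] [Module.Projective Λ M]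
    [Module.Projective Γ N] : Module.Projective (Λ ⊗[K] Γ) (M ⊗[K] N) := by
  obtain ⟨k, f, hf⟩ := Module.Finite.exists_fin' Λ M
  obtain ⟨l, g, hg⟩ := Module.Finite.exists_fin' Γ N
  obtain ⟨f', hf'⟩ := Module.projective_lifting_property f LinearMap.id hf
  obtain ⟨g', hg'⟩ := Module.projective_lifting_property g LinearMap.id hg
  have := free_tensor_proj (K := K) (Λ := Λ) (Γ := Γ) k l
  refine Module.Projective.of_split (tmap f' g') (tmap f g) ?_
  rw [tmap_comp, hf', hg', tmap_id]

/-- The coinduced module `Hom_K(A, X)`. -/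
def Coind (K A X : Type u) [Field K] [Ring A] [Algebra K A] [AddCommGroup X] [Module K X] :
    Type u := A →ₗ[K] X

section Coind
variable {A X : Type u} [Ring A] [Algebra K A] [AddCommGroup X] [Module K X]

noncomputable instance : AddCommGroup (Coind K A X) :=
  inferInstanceAs (AddCommGroup (A →ₗ[K] X))
noncomputable instance : Module K (Coind K A X) :=
  inferInstanceAs (Module K (A →ₗ[K] X))

/-- Evaluation. -/
def Coind.ev (φ : Coind K A X) : A →ₗ[K] X := φ

/-- Constructor. -/
def Coind.mk (φ : A →ₗ[K] X) : Coind K A X := φ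

lemma Coind.ext' {φ ψ : Coind K A X} (h : ∀ b, φ.ev b = ψ.ev b) : φ = ψ := LinearMap.ext h

noncomputable instance : SMul A (Coind K A X) where
  smul a φ := Coind.mk (φ.ev.comp (LinearMap.mulRight K a))

@[simp] lemma Coind.smul_ev (a : A) (φ : Coind K A X) (b : A) :
    (a • φ).ev b = φ.ev (b * a) := rfl
@[simp] lemma Coind.ksmul_ev (a : K) (φ : Coind K A X) (b : A) :
    (a • φ).ev b = a • φ.ev b := rfl
@[simp] lemma Coind.add_ev (φ ψ : Coind K A X) (b : A) :
    (φ + ψ).ev b = φ.ev b + ψ.ev b := rfl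
@[simp] lemma Coind.zero_ev (b : A) : (0 : Coind K A X).ev b = 0 := rfl

noncomputable instance : Module A (Coind K A X) where
  one_smul φ := Coind.ext' fun b => by simp
  mul_smul a a' φ := Coind.ext' fun b => by simp [mul_assoc]
  smul_zero a := Coind.ext' fun b => by simp
  smul_add a φ ψ := Coind.ext' fun b => by simp
  add_smul a a' φ := Coind.ext' fun b => by simp [mul_add]
  zero_smul φ := Coind.ext' fun b => by simp

instance : IsScalarTower K A (Coind K A X) where
  smul_assoc k a φ := Coind.ext' fun b => by
    rw [Coind.smul_ev, Coind.ksmul_ev, Coind.smul_ev, mul_smul_comm, map_smul]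

instance [FiniteDimensional K A] [FiniteDimensional K X] : FiniteDimensional K (Coind K A X) :=
  inferInstanceAs (FiniteDimensional K (A →ₗ[K] X))

/-- The embedding `X → Hom_K(A, X)`. -/
noncomputable def Coind.emb (K A X : Type u) [Field K] [Ring A] [Algebra K A] [AddCommGroup X]
    [Module K X] [Module A X] [IsScalarTower K A X] : X →ₗ[A] Coind K A X where
  toFun x := (LinearMap.toSpanSingleton A X x).restrictScalars K
  map_add' x y := Coind.ext' fun b => smul_add b x y
  map_smul' a x := Coind.ext' fun b => (mul_smul b a x).symm

lemma Coind.emb_ev [Module A X] [IsScalarTower K A X] (x : X) (b : A) :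
    (Coind.emb K A X x).ev b = b • x := rfl

lemma Coind.emb_inj [Module A X] [IsScalarTower K A X] :
    Function.Injective (Coind.emb K A X) := by
  intro x y h
  have := congrArg (fun φ => Coind.ev φ 1) h
  simpa [Coind.emb_ev] using this

lemma Coind.injective : Module.Injective A (Coind K A X) where
  out := by
    intro U V _ _ _ _ i hi f
    letI : Module K U := Module.compHom U (algebraMap K A)
    letI : Module K V := Module.compHom V (algebraMap K A)
    haveI : IsScalarTower K A U := IsScalarTower.of_algebraMap_smul fun _ _ => rfl
    haveI : IsScalarTower K A V := IsScalarTower.of_algebraMap_smul fun _ _ => rfl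
    obtain ⟨π, hπ⟩ := (i.restrictScalars K).exists_leftInverse_of_injective
      (LinearMap.ker_eq_bot.2 hi)
    have hπ' : ∀ u, π (i u) = u := fun u => LinearMap.congr_fun hπ u
    let e1 : Coind K A X →ₗ[K] X :=
      { toFun := fun φ => φ.ev 1, map_add' := fun _ _ => rfl, map_smul' := fun _ _ => rfl }
    refine ⟨{ toFun := fun v => ((e1.comp (f.restrictScalars K)).comp π).comp
                ((LinearMap.toSpanSingleton A V v).restrictScalars K)
              map_add' := ?_, map_smul' := ?_ }, ?_⟩
    · intro v w
      refine Coind.ext' fun b => ?_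
      change (f (π (b • (v + w)))).ev 1 = (f (π (b • v))).ev 1 + (f (π (b • w))).ev 1
      rw [smul_add, map_add, map_add, Coind.add_ev]
    · intro a v
      refine Coind.ext' fun b => ?_
      change (f (π (b • (a • v)))).ev 1 = (f (π ((b * a) • v))).ev 1
      rw [mul_smul]
    · intro u
      refine Coind.ext' fun b => ?_
      change (f (π (b • i u))).ev 1 = (f u).ev b
      rw [← map_smul, hπ', map_smul, Coind.smul_ev, one_mul]

end Coind

lemma tensor_inj [FiniteDimensional K Λ] [FiniteDimensional K Γ]
    [hM : Module.Injective Λ M] [hN : Module.Injective Γ N] :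
    Module.Injective (Λ ⊗[K] Γ) (M ⊗[K] N) := by
  obtain ⟨ρ, hρ⟩ := hM.out (Coind.emb K Λ M) Coind.emb_inj LinearMap.id
  obtain ⟨σ, hσ⟩ := hN.out (Coind.emb K Γ N) Coind.emb_inj LinearMap.id
  have hI := Coind.injective (K := K) (A := Λ ⊗[K] Γ) (X := M ⊗[K] N)
  let E : (Λ →ₗ[K] M) ⊗[K] (Γ →ₗ[K] N) ≃ₗ[K] (Λ ⊗[K] Γ →ₗ[K] M ⊗[K] N) :=
    homTensorHomEquiv K Λ Γ M N
  let E' : Coind K Λ M ⊗[K] Coind K Γ N →ₗ[K] Coind K (Λ ⊗[K] Γ) (M ⊗[K] N) := E.toLinearMap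
  have hE' : ∀ (α : Coind K Λ M) (β : Coind K Γ N) (c : Λ ⊗[K] Γ),
      (E' (α ⊗ₜ β)).ev c = TensorProduct.map α.ev β.ev c := by
    intro α β c
    change homTensorHomEquiv K Λ Γ M N (α.ev ⊗ₜ β.ev) c = _
    rw [homTensorHomEquiv_apply, TensorProduct.homTensorHomMap_apply]
  let F : Coind K Λ M ⊗[K] Coind K Γ N →ₗ[Λ ⊗[K] Γ] Coind K (Λ ⊗[K] Γ) (M ⊗[K] N) :=
    linOf E' (by
      intro a g α β
      refine Coind.ext' fun b => ?_
      rw [hE', Coind.smul_ev, hE']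
      induction b using TensorProduct.induction_on with
      | zero => simp
      | add x y hx hy => rw [add_mul, map_add, hx, hy, map_add]
      | tmul x y => simp [Algebra.TensorProduct.tmul_mul_tmul])
  have hF : Function.Bijective F := E.bijective
  let Fe := LinearEquiv.ofBijective F hF
  let R : Coind K (Λ ⊗[K] Γ) (M ⊗[K] N) →ₗ[Λ ⊗[K] Γ] M ⊗[K] N :=
    (tmap ρ σ).comp Fe.symm.toLinearMap
  let I : M ⊗[K] N →ₗ[Λ ⊗[K] Γ] Coind K (Λ ⊗[K] Γ) (M ⊗[K] N) :=
    F.comp (tmap (Coind.emb K Λ M) (Coind.emb K Γ N))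
  have hRI : ∀ x, R (I x) = x := by
    intro x
    change tmap ρ σ (Fe.symm (Fe (tmap (Coind.emb K Λ M) (Coind.emb K Γ N) x))) = x
    rw [LinearEquiv.symm_apply_apply]
    refine LinearMap.congr_fun (f := (tmap ρ σ).comp (tmap (Coind.emb K Λ M) (Coind.emb K Γ N)))
      (g := LinearMap.id) (tens_ext fun x y => ?_) x
    simp [hρ, hσ]
  constructor
  intro U V _ _ _ _ i hi f
  obtain ⟨h, hh⟩ := hI.out i hi (I.comp f)
  exact ⟨R.comp h, fun u => by
    change R (h (i u)) = f u
    rw [hh]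
    exact hRI (f u)⟩

end ProjInj
section Dims

section General
variable {A X Y Z : Type u} [Ring A] [AddCommGroup X] [Module A X] [AddCommGroup Y]
    [Module A Y] [AddCommGroup Z] [Module A Z] {f : X →ₗ[A] Y} {g : Y →ₗ[A] Z}

/-- Projective dimension `< n`. -/
abbrev PD (A X : Type u) [Ring A] [AddCommGroup X] [Module A X] (n : ℕ) : Prop :=
  HasProjectiveDimensionLT (ModuleCat.of A X) n

/-- Injective dimension `< n`. -/
abbrev ID (A X : Type u) [Ring A] [AddCommGroup X] [Module A X] (n : ℕ) : Prop :=
  HasInjectiveDimensionLT (ModuleCat.of A X) n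

lemma PD.mono {n m : ℕ} (h : PD A X n) (hnm : n ≤ m) : PD A X m :=
  hasProjectiveDimensionLT_of_ge _ n m hnm

lemma ID.mono {n m : ℕ} (h : ID A X n) (hnm : n ≤ m) : ID A X m :=
  hasInjectiveDimensionLT_of_ge _ n m hnm

lemma PD_one : PD A X 1 ↔ Module.Projective A X := by
  rw [IsProjective.iff_projective, projective_iff_hasProjectiveDimensionLT_one]

lemma ID_one : ID A X 1 ↔ Module.Injective A X := by
  rw [Module.injective_iff_injective_object, injective_iff_hasInjectiveDimensionLT_one]

lemma SES.pd1 (h : SES f g) {n : ℕ} (hY : PD A Y n) (hZ : PD A Z (n + 1)) : PD A X n :=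
  h.shortExact.hasProjectiveDimensionLT_X₁ n hY hZ

lemma SES.pd3 (h : SES f g) {n : ℕ} (hX : PD A X n) (hY : PD A Y (n + 1)) : PD A Z (n + 1) :=
  h.shortExact.hasProjectiveDimensionLT_X₃ n hX hY

lemma SES.id3 (h : SES f g) {n : ℕ} (hY : ID A Y n) (hX : ID A X (n + 1)) : ID A Z n :=
  h.shortExact.hasInjectiveDimensionLT_X₃ n hY hX

lemma SES.id1 (h : SES f g) {n : ℕ} (hZ : ID A Z n) (hY : ID A Y (n + 1)) : ID A X (n + 1) :=
  h.shortExact.hasInjectiveDimensionLT_X₁ n hZ hY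

lemma SES.proj_of_retract (h : SES f g) [Module.Projective A Y] (ρ : Y →ₗ[A] X)
    (hρ : ρ.comp f = LinearMap.id) : Module.Projective A Z := by
  have t : (∃ l, l ∘ₗ f = LinearMap.id) ↔ ∃ l, g ∘ₗ l = LinearMap.id :=
    (h.exact.split_tfae h.inj h.surj).out 1 0
  obtain ⟨s, hs⟩ := t.1 ⟨ρ, hρ⟩
  exact Module.Projective.of_split s g hs

lemma SES.inj_of_section (h : SES f g) [hY : Module.Injective A Y] (ρ : Z →ₗ[A] Y)
    (hρ : g.comp ρ = LinearMap.id) : Module.Injective A X := by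
  have t : (∃ l, g ∘ₗ l = LinearMap.id) ↔ ∃ l, l ∘ₗ f = LinearMap.id :=
    (h.exact.split_tfae h.inj h.surj).out 0 1
  obtain ⟨s, hs⟩ := t.1 ⟨ρ, hρ⟩
  constructor
  intro U V _ _ _ _ i hi q
  obtain ⟨k, hk⟩ := hY.out i hi (f.comp q)
  refine ⟨s.comp k, fun u => ?_⟩
  rw [LinearMap.comp_apply, hk]
  exact LinearMap.congr_fun hs (q u)

end General

section Res
variable {K Λ M : Type u} [Field K] [Ring Λ] [Algebra K Λ] [FiniteDimensional K Λ]
  [AddCommGroup M] [Module K M] [Module Λ M] [IsScalarTower K Λ M] [FiniteDimensional K M]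

lemma proj_res (C : Prop)
    (h : ∀ (Q P : Type u) [AddCommGroup P] [Module K P] [Module Λ P] [IsScalarTower K Λ P]
      [FiniteDimensional K P] [AddCommGroup Q] [Module K Q] [Module Λ Q] [IsScalarTower K Λ Q]
      [FiniteDimensional K Q] (f : Q →ₗ[Λ] P) (g : P →ₗ[Λ] M),
      SES f g → Module.Projective Λ P → C) : C := by
  have : Module.Finite Λ M := Module.Finite.of_restrictScalars_finite K Λ M
  obtain ⟨k, g, hg⟩ := Module.Finite.exists_fin' Λ M
  have : FiniteDimensional K (LinearMap.ker g) :=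
    inferInstanceAs (FiniteDimensional K ((LinearMap.ker g).restrictScalars K))
  exact h (LinearMap.ker g) (Fin k → Λ) (LinearMap.ker g).subtype g
    ⟨Subtype.val_injective, LinearMap.exact_subtype_ker_map g, hg⟩ inferInstance

lemma inj_res (C : Prop)
    (h : ∀ (P Q : Type u) [AddCommGroup P] [Module K P] [Module Λ P] [IsScalarTower K Λ P]
      [FiniteDimensional K P] [AddCommGroup Q] [Module K Q] [Module Λ Q] [IsScalarTower K Λ Q]
      [FiniteDimensional K Q] (f : M →ₗ[Λ] P) (g : P →ₗ[Λ] Q),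
      SES f g → Module.Injective Λ P → C) : C := by
  let R := LinearMap.range (Coind.emb K Λ M)
  have : FiniteDimensional K (Coind K Λ M ⧸ R) :=
    inferInstanceAs (FiniteDimensional K (Coind K Λ M ⧸ R.restrictScalars K))
  exact h (Coind K Λ M) (Coind K Λ M ⧸ R) (Coind.emb K Λ M) R.mkQ
    ⟨Coind.emb_inj, LinearMap.exact_map_mkQ_range _, R.mkQ_surjective⟩ Coind.injective

end Res

section Main
variable {K Λ Γ : Type u} [Field K] [Ring Λ] [Ring Γ] [Algebra K Λ] [Algebra K Γ]
  [FiniteDimensional K Λ] [FiniteDimensional K Γ]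

lemma pd_upper (a : ℕ) : ∀ (b : ℕ) (M N : Type u)
    [AddCommGroup M] [Module K M] [Module Λ M] [IsScalarTower K Λ M] [FiniteDimensional K M]
    [AddCommGroup N] [Module K N] [Module Γ N] [IsScalarTower K Γ N] [FiniteDimensional K N],
    PD Λ M (a + 1) → PD Γ N (b + 1) → PD (Λ ⊗[K] Γ) (M ⊗[K] N) (a + b + 1) := by
  induction a with
  | zero =>
    intro b
    induction b with
    | zero =>
      intro M N _ _ _ _ _ _ _ _ _ _ hM hN
      have := Module.Finite.of_restrictScalars_finite K Λ M
      have := Module.Finite.of_restrictScalars_finite K Γ N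
      have := PD_one.1 hM
      have := PD_one.1 hN
      exact PD_one.2 tensor_proj
    | succ b ih =>
      intro M N _ _ _ _ _ _ _ _ _ _ hM hN
      refine proj_res (K := K) (Λ := Γ) (M := N) _ ?_
      intro Q P _ _ _ _ _ _ _ _ _ _ f g h hP
      have hP' : PD Γ P (b + 1) := (PD_one.2 hP).mono (by omega)
      have h1 := ih M Q hM (h.pd1 hP' hN)
      have h2 := ih M P hM hP'
      exact (h.tr (K := K) (Λ := Λ) (M := M)).pd3 h1 (h2.mono (by omega))
  | succ a ih =>
    intro b M N _ _ _ _ _ _ _ _ _ _ hM hN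
    refine proj_res (K := K) (Λ := Λ) (M := M) _ ?_
    intro Q P _ _ _ _ _ _ _ _ _ _ f g h hP
    have hP' : PD Λ P (a + 1) := (PD_one.2 hP).mono (by omega)
    have h1 := ih b Q N (h.pd1 hP' hM) hN
    have h2 := ih b P N hP' hN
    have := (h.tl (K := K) (Γ := Γ) (N := N)).pd3 h1 (h2.mono (by omega))
    exact this.mono (by omega)

lemma id_upper (a : ℕ) : ∀ (b : ℕ) (M N : Type u)
    [AddCommGroup M] [Module K M] [Module Λ M] [IsScalarTower K Λ M] [FiniteDimensional K M]
    [AddCommGroup N] [Module K N] [Module Γ N] [IsScalarTower K Γ N] [FiniteDimensional K N],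
    ID Λ M (a + 1) → ID Γ N (b + 1) → ID (Λ ⊗[K] Γ) (M ⊗[K] N) (a + b + 1) := by
  induction a with
  | zero =>
    intro b
    induction b with
    | zero =>
      intro M N _ _ _ _ _ _ _ _ _ _ hM hN
      have := ID_one.1 hM
      have := ID_one.1 hN
      exact ID_one.2 tensor_inj
    | succ b ih =>
      intro M N _ _ _ _ _ _ _ _ _ _ hM hN
      refine inj_res (K := K) (Λ := Γ) (M := N) _ ?_
      intro P Q _ _ _ _ _ _ _ _ _ _ f g h hP
      have hP' : ID Γ P (b + 1) := (ID_one.2 hP).mono (by omega)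
      have h1 := ih M Q hM (h.id3 hP' hN)
      have h2 := ih M P hM hP'
      exact (h.tr (K := K) (Λ := Λ) (M := M)).id1 h1 (h2.mono (by omega))
  | succ a ih =>
    intro b M N _ _ _ _ _ _ _ _ _ _ hM hN
    refine inj_res (K := K) (Λ := Λ) (M := M) _ ?_
    intro P Q _ _ _ _ _ _ _ _ _ _ f g h hP
    have hP' : ID Λ P (a + 1) := (ID_one.2 hP).mono (by omega)
    have h1 := ih b Q N (h.id3 hP' hM) hN
    have h2 := ih b P N hP' hN
    have := (h.tl (K := K) (Γ := Γ) (N := N)).id1 h1 (h2.mono (by omega))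
    exact this.mono (by omega)

lemma pd_base (M N : Type u)
    [AddCommGroup M] [Module K M] [Module Λ M] [IsScalarTower K Λ M] [FiniteDimensional K M]
    [AddCommGroup N] [Module K N] [Module Γ N] [IsScalarTower K Γ N] [FiniteDimensional K N]
    (hM : PD Λ M 2) (hM' : ¬ PD Λ M 1) (hN : PD Γ N 2) (hN' : ¬ PD Γ N 1) :
    ¬ PD (Λ ⊗[K] Γ) (M ⊗[K] N) 2 := by
  intro hMN
  refine proj_res (K := K) (Λ := Λ) (M := M) _ ?_
  intro V V' _ _ _ _ _ _ _ _ _ _ d g h hP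
  refine proj_res (K := K) (Λ := Γ) (M := N) _ ?_
  intro Q Q' _ _ _ _ _ _ _ _ _ _ d' g' h' hP'
  have := Module.Finite.of_restrictScalars_finite K Λ V'
  have := Module.Finite.of_restrictScalars_finite K Γ Q'
  have hS := (h'.tr (K := K) (Λ := Λ) (M := V)).shortExact
  have hT := (h'.tr (K := K) (Λ := Λ) (M := V')).shortExact
  have hZ := (h.tl (K := K) (Γ := Γ) (N := N))
  have hPP : Module.Projective (Λ ⊗[K] Γ) (V' ⊗[K] Q') := tensor_proj
  obtain ⟨r, s, hrs⟩ := exists_split_of_pd hS hT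
    { τ₁ := ModuleCat.ofHom (tmap d (LinearMap.id : Q →ₗ[Γ] Q))
      τ₂ := ModuleCat.ofHom (tmap d (LinearMap.id : Q' →ₗ[Γ] Q'))
      τ₃ := ModuleCat.ofHom (tmap d (LinearMap.id : N →ₗ[Γ] N))
      comm₁₂ := by
        refine ModuleCat.hom_ext ?_
        change (tmap _ _).comp (tmap _ _) = (tmap _ _).comp (tmap _ _)
        rw [tmap_comp, tmap_comp]; rfl
      comm₂₃ := by
        refine ModuleCat.hom_ext ?_
        change (tmap _ _).comp (tmap _ _) = (tmap _ _).comp (tmap _ _)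
        rw [tmap_comp, tmap_comp]; rfl }
    (ModuleCat.ofHom (tmap g (LinearMap.id : N →ₗ[Γ] N)))
    (ModuleCat.hom_ext hZ.comp_eq_zero) hZ.shortExact hMN
    ((IsProjective.iff_projective _).1 hPP)
  by_cases hd : ∃ ρ : Q' →ₗ[Γ] Q, ρ.comp d' = LinearMap.id
  · obtain ⟨ρ, hρ⟩ := hd
    exact hN' (PD_one.2 (h'.proj_of_retract ρ hρ))
  · obtain ⟨ρ, hρ⟩ := retract_of_proj (K := K) d d' r.hom s.hom (fun x =>
      LinearMap.congr_fun (congrArg ModuleCat.Hom.hom hrs) x) hd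
    exact hM' (PD_one.2 (h.proj_of_retract ρ hρ))

lemma id_base (M N : Type u)
    [AddCommGroup M] [Module K M] [Module Λ M] [IsScalarTower K Λ M] [FiniteDimensional K M]
    [AddCommGroup N] [Module K N] [Module Γ N] [IsScalarTower K Γ N] [FiniteDimensional K N]
    (hM : ID Λ M 2) (hM' : ¬ ID Λ M 1) (hN : ID Γ N 2) (hN' : ¬ ID Γ N 1) :
    ¬ ID (Λ ⊗[K] Γ) (M ⊗[K] N) 2 := by
  intro hMN
  refine inj_res (K := K) (Λ := Λ) (M := M) _ ?_
  intro V' V _ _ _ _ _ _ _ _ _ _ g d h hP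
  refine inj_res (K := K) (Λ := Γ) (M := N) _ ?_
  intro Q' Q _ _ _ _ _ _ _ _ _ _ g' d' h' hP'
  have hS := (h'.tr (K := K) (Λ := Λ) (M := V)).shortExact
  have hT := (h'.tr (K := K) (Λ := Λ) (M := V')).shortExact
  have hZ := (h.tl (K := K) (Γ := Γ) (N := N))
  have hPP : Module.Injective (Λ ⊗[K] Γ) (V' ⊗[K] Q') := tensor_inj
  obtain ⟨r, s, hrs⟩ := exists_split_of_id hS hT
    { τ₁ := ModuleCat.ofHom (tmap d (LinearMap.id : N →ₗ[Γ] N))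
      τ₂ := ModuleCat.ofHom (tmap d (LinearMap.id : Q' →ₗ[Γ] Q'))
      τ₃ := ModuleCat.ofHom (tmap d (LinearMap.id : Q →ₗ[Γ] Q))
      comm₁₂ := by
        refine ModuleCat.hom_ext ?_
        change (tmap _ _).comp (tmap _ _) = (tmap _ _).comp (tmap _ _)
        rw [tmap_comp, tmap_comp]; rfl
      comm₂₃ := by
        refine ModuleCat.hom_ext ?_
        change (tmap _ _).comp (tmap _ _) = (tmap _ _).comp (tmap _ _)
        rw [tmap_comp, tmap_comp]; rfl }
    (ModuleCat.ofHom (tmap g (LinearMap.id : N →ₗ[Γ] N)))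
    (ModuleCat.hom_ext hZ.comp_eq_zero) hZ.shortExact hMN
    ((Module.injective_iff_injective_object _ _).1 hPP)
  by_cases hd : ∃ ρ : Q →ₗ[Γ] Q', d'.comp ρ = LinearMap.id
  · obtain ⟨ρ, hρ⟩ := hd
    exact hN' (ID_one.2 (h'.inj_of_section ρ hρ))
  · obtain ⟨ρ, hρ⟩ := section_of_inj (K := K) d d' r.hom s.hom (fun x =>
      LinearMap.congr_fun (congrArg ModuleCat.Hom.hom hrs) x) hd
    exact hM' (ID_one.2 (h.inj_of_section ρ hρ))

lemma pd_lower (a : ℕ) : ∀ (b : ℕ) (M N : Type u)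
    [AddCommGroup M] [Module K M] [Module Λ M] [IsScalarTower K Λ M] [FiniteDimensional K M]
    [AddCommGroup N] [Module K N] [Module Γ N] [IsScalarTower K Γ N] [FiniteDimensional K N],
    PD Λ M (a + 2) → ¬ PD Λ M (a + 1) → PD Γ N (b + 2) → ¬ PD Γ N (b + 1) →
    ¬ PD (Λ ⊗[K] Γ) (M ⊗[K] N) (a + b + 2) := by
  induction a with
  | zero =>
    intro b
    induction b with
    | zero => exact fun M N => pd_base M N
    | succ b ih =>
      intro M N _ _ _ _ _ _ _ _ _ _ hM hM' hN hN' hMN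
      refine proj_res (K := K) (Λ := Γ) (M := N) _ ?_
      intro Q P _ _ _ _ _ _ _ _ _ _ f g h hP
      have hP1 : PD Γ P 1 := PD_one.2 hP
      refine ih M Q hM hM' (h.pd1 (hP1.mono (by omega)) hN)
        (fun hQ => hN' (h.pd3 hQ (hP1.mono (by omega)))) ?_
      have h2 := pd_upper (K := K) 1 0 M P hM hP1
      exact (h.tr (K := K) (Λ := Λ) (M := M)).pd1 (h2.mono (by omega)) (hMN.mono (by omega))
  | succ a ih =>
    intro b M N _ _ _ _ _ _ _ _ _ _ hM hM' hN hN' hMN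
    refine proj_res (K := K) (Λ := Λ) (M := M) _ ?_
    intro Q P _ _ _ _ _ _ _ _ _ _ f g h hP
    have hP1 : PD Λ P 1 := PD_one.2 hP
    refine ih b Q N (h.pd1 (hP1.mono (by omega)) hM)
      (fun hQ => hM' (h.pd3 hQ (hP1.mono (by omega)))) hN hN' ?_
    have h2 := pd_upper (K := K) 0 (b + 1) P N hP1 hN
    exact (h.tl (K := K) (Γ := Γ) (N := N)).pd1 (h2.mono (by omega)) (hMN.mono (by omega))

lemma id_lower (a : ℕ) : ∀ (b : ℕ) (M N : Type u)
    [AddCommGroup M] [Module K M] [Module Λ M] [IsScalarTower K Λ M] [FiniteDimensional K M]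
    [AddCommGroup N] [Module K N] [Module Γ N] [IsScalarTower K Γ N] [FiniteDimensional K N],
    ID Λ M (a + 2) → ¬ ID Λ M (a + 1) → ID Γ N (b + 2) → ¬ ID Γ N (b + 1) →
    ¬ ID (Λ ⊗[K] Γ) (M ⊗[K] N) (a + b + 2) := by
  induction a with
  | zero =>
    intro b
    induction b with
    | zero => exact fun M N => id_base M N
    | succ b ih =>
      intro M N _ _ _ _ _ _ _ _ _ _ hM hM' hN hN' hMN
      refine inj_res (K := K) (Λ := Γ) (M := N) _ ?_
      intro P Q _ _ _ _ _ _ _ _ _ _ f g h hP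
      have hP1 : ID Γ P 1 := ID_one.2 hP
      refine ih M Q hM hM' (h.id3 (hP1.mono (by omega)) hN)
        (fun hQ => hN' (h.id1 hQ (hP1.mono (by omega)))) ?_
      have h2 := id_upper (K := K) 1 0 M P hM hP1
      exact (h.tr (K := K) (Λ := Λ) (M := M)).id3 (h2.mono (by omega)) (hMN.mono (by omega))
  | succ a ih =>
    intro b M N _ _ _ _ _ _ _ _ _ _ hM hM' hN hN' hMN
    refine inj_res (K := K) (Λ := Λ) (M := M) _ ?_
    intro P Q _ _ _ _ _ _ _ _ _ _ f g h hP
    have hP1 : ID Λ P 1 := ID_one.2 hP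
    refine ih b Q N (h.id3 (hP1.mono (by omega)) hM)
      (fun hQ => hM' (h.id1 hQ (hP1.mono (by omega)))) hN hN' ?_
    have h2 := id_upper (K := K) 0 (b + 1) P N hP1 hN
    exact (h.tl (K := K) (Γ := Γ) (N := N)).id3 (h2.mono (by omega)) (hMN.mono (by omega))

end Main
end Dims

open TensorProduct in
/-- For finite dimensional algebras `Λ`, `Γ` over a field `K`, `n, m ≥ 1`:
(1) if `id_Λ M = n` and `id_Γ N = m` then `id_{Λ⊗Γ} (M⊗N) = n+m`;
(2) if `pd_Λ M = n` and `pd_Γ N = m` then `pd_{Λ⊗Γ} (M⊗N) = n+m`. -/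
theorem injDim_projDim_tensorProduct
    (K Λ Γ M N : Type u) [Field K] [Ring Λ] [Ring Γ]
    [Algebra K Λ] [Algebra K Γ] [FiniteDimensional K Λ] [FiniteDimensional K Γ]
    [AddCommGroup M] [Module K M] [Module Λ M] [IsScalarTower K Λ M] [Module.Finite Λ M]
    [AddCommGroup N] [Module K N] [Module Γ N] [IsScalarTower K Γ N] [Module.Finite Γ N]
    (n m : ℕ) (hn : 1 ≤ n) (hm : 1 ≤ m) :
    (InjDimEq K Λ M n → InjDimEq K Γ N m →
      InjDimEq K (Λ ⊗[K] Γ) (M ⊗[K] N) (n + m)) ∧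
    (ProjDimEq K Λ M n → ProjDimEq K Γ N m →
      ProjDimEq K (Λ ⊗[K] Γ) (M ⊗[K] N) (n + m)) := by
  have : FiniteDimensional K M := Module.Finite.trans Λ M
  have : FiniteDimensional K N := Module.Finite.trans Γ N
  obtain ⟨a, rfl⟩ : ∃ a, n = a + 1 := ⟨n - 1, by omega⟩
  obtain ⟨b, rfl⟩ : ∃ b, m = b + 1 := ⟨m - 1, by omega⟩
  have e : a + 1 + (b + 1) = (a + b + 1) + 1 := by omega
  rw [e]
  constructor
  · rw [injDimEq_iff, injDimEq_iff, injDimEq_iff]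
    rintro ⟨hM, hM'⟩ ⟨hN, hN'⟩
    exact ⟨(id_upper (a + 1) (b + 1) M N hM hN).mono (by omega),
      fun h => id_lower a b M N hM hM' hN hN' h⟩
  · rw [projDimEq_iff, projDimEq_iff, projDimEq_iff]
    rintro ⟨hM, hM'⟩ ⟨hN, hN'⟩
    exact ⟨(pd_upper (a + 1) (b + 1) M N hM hN).mono (by omega),
      fun h => pd_lower a b M N hM hM' hN hN' h⟩
end
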